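/- arXiv:2509.07788 — 3 statements merged into one kernel-verified Lean document; each statement's English description precedes it below -/
import Mathlib

section
/- For every integer N ≥ 2 and every k ∈ ℂ with Re(k) > −3, the absolutely convergent integral ∫_{ℝ^{N−1}} ∏_{1≤j<ℓ≤N−1} (x_ℓ − x_j)² · ∏_{n=1}^{N−1} (1 + i x_n)^{−k−N} (1 − i x_n)^{−N} dx_1 ⋯ dx_{N−1} equals (2π)^{N−1} · 2^{−(N−1)(k+N+1)} · Γ(N+k+1)/Γ(k+2), where 2^{w} = exp(w log 2) and Γ denotes the complex Gamma function. -/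
open MeasureTheory Complex

lemma aux_int_real (s b : ℝ) (hs : -1 < s) (hb : 0 < b) :
    IntegrableOn (fun t : ℝ => t ^ s * Real.exp (-b * t)) (Set.Ioi 0) := by
  have := integrableOn_rpow_mul_exp_neg_mul_rpow (p := 1) hs one_pos hb
  simpa using this

lemma aux_meas (c r : ℂ) : AEStronglyMeasurable (fun t : ℝ => (t : ℂ) ^ c * cexp (-(r * t)))
    (volume.restrict (Set.Ioi 0)) := by
  apply ContinuousOn.aestronglyMeasurable _ measurableSet_Ioi
  intro t ht
  apply ContinuousAt.continuousWithinAt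
  apply ContinuousAt.mul
  · exact (Complex.continuousAt_ofReal_cpow_const t c (Or.inr (ne_of_gt ht)))
  · fun_prop

lemma aux_norm (c r : ℂ) (t : ℝ) (ht : 0 < t) :
    ‖(t : ℂ) ^ c * cexp (-(r * t))‖ = t ^ c.re * Real.exp (-r.re * t) := by
  rw [norm_mul, Complex.norm_cpow_eq_rpow_re_of_pos ht, Complex.norm_exp]
  simp

lemma aux_int (c r : ℂ) (hc : -1 < c.re) (hr : 0 < r.re) :
    IntegrableOn (fun t : ℝ => (t : ℂ) ^ c * cexp (-(r * t))) (Set.Ioi 0) := by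
  refine Integrable.mono' (aux_int_real c.re r.re hc hr) (aux_meas c r) ?_
  filter_upwards [ae_restrict_mem measurableSet_Ioi] with t ht
  rw [aux_norm c r t ht]

lemma gamma_complex (a r : ℂ) (ha : 0 < a.re) (hr : 0 < r.re) :
    ∫ t in Set.Ioi (0 : ℝ), (t : ℂ) ^ (a - 1) * cexp (-(r * t)) = r ^ (-a) * Complex.Gamma a := by
  set U : Set ℂ := {z | 0 < z.re} with hU
  have hUo : IsOpen U := isOpen_lt continuous_const Complex.continuous_re
  have hUc : IsPreconnected U := (convex_halfSpace_re_gt 0).isPreconnected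
  have h1 : DifferentiableOn ℂ
      (fun r : ℂ => ∫ t in Set.Ioi (0 : ℝ), (t : ℂ) ^ (a - 1) * cexp (-(r * t))) U := by
    intro r₀ hr₀
    have hr₀' : 0 < r₀.re := hr₀
    have key := hasDerivAt_integral_of_dominated_loc_of_deriv_le (𝕜 := ℂ)
      (μ := volume.restrict (Set.Ioi (0 : ℝ)))
      (F := fun (r : ℂ) (t : ℝ) => (t : ℂ) ^ (a - 1) * cexp (-(r * t)))
      (F' := fun (r : ℂ) (t : ℝ) => -((t : ℂ) ^ a * cexp (-(r * t))))
      (x₀ := r₀) (s := Metric.ball r₀ (r₀.re / 2))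
      (bound := fun t => t ^ a.re * Real.exp (-(r₀.re / 2) * t))
      (Metric.ball_mem_nhds _ (by linarith))
      (Filter.Eventually.of_forall fun r => aux_meas _ _)
      (aux_int _ _ (by simpa using ha) hr₀')
      (aux_meas _ _).neg
      ?_ (aux_int_real _ _ (by linarith) (by linarith)) ?_
    · exact key.2.differentiableAt.differentiableWithinAt
    · filter_upwards [ae_restrict_mem measurableSet_Ioi] with t ht r hr
      have ht' : 0 < t := ht
      rw [norm_neg, aux_norm _ _ _ ht]
      have h3 : |(r - r₀).re| ≤ ‖r - r₀‖ := Complex.abs_re_le_norm _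
      rw [Metric.mem_ball, dist_eq_norm] at hr
      have h4 := abs_le.1 (h3.trans hr.le)
      rw [Complex.sub_re] at h4
      gcongr
      linarith
    · filter_upwards [ae_restrict_mem measurableSet_Ioi] with t ht r hr
      have ht' : (t : ℂ) ≠ 0 := by exact_mod_cast (ne_of_gt ht)
      have h5 : HasDerivAt (fun r : ℂ => -(r * (t : ℂ))) (-(1 * (t : ℂ))) r :=
        ((hasDerivAt_id r).mul_const (t : ℂ)).neg
      have h6 := h5.cexp.const_mul ((t : ℂ) ^ (a - 1))
      have h7 : -((t : ℂ) ^ a * cexp (-(r * t))) =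
          (t : ℂ) ^ (a - 1) * (cexp (-(r * t)) * -(1 * (t : ℂ))) := by
        rw [Complex.cpow_sub _ _ ht', Complex.cpow_one]
        field_simp
      simp only [h7]
      exact h6
  have h2 : DifferentiableOn ℂ (fun r : ℂ => r ^ (-a) * Complex.Gamma a) U := by
    intro r₀ hr₀
    apply DifferentiableAt.differentiableWithinAt
    apply DifferentiableAt.mul_const
    exact ((hasDerivAt_id r₀).cpow_const (Or.inl hr₀)).differentiableAt
  have h3 := (h1.analyticOnNhd hUo).eqOn_of_preconnected_of_frequently_eq
    (h2.analyticOnNhd hUo) hUc (z₀ := 1) (by simp [hU]) ?_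
  · exact h3 hr
  · have ht : Filter.Tendsto (fun n : ℕ => (((1 + 1 / ((n : ℝ) + 1) : ℝ)) : ℂ)) Filter.atTop
        (nhdsWithin 1 {1}ᶜ) := by
      rw [tendsto_nhdsWithin_iff]
      constructor
      · have := (tendsto_one_div_add_atTop_nhds_zero_nat (𝕜 := ℝ)).const_add 1
        have h := (Complex.continuous_ofReal.tendsto _).comp this
        simpa [Function.comp_def] using h
      · refine Filter.Eventually.of_forall fun n => ?_
        have : (1 + 1 / ((n : ℝ) + 1) : ℝ) ≠ 1 := by
          have : 0 < 1 / ((n : ℝ) + 1) := by positivity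
          linarith
        intro h
        exact this (Complex.ofReal_injective (by simpa using h))
    apply ht.frequently
    refine Filter.Eventually.frequently (Filter.Eventually.of_forall fun n => ?_)
    have hp : (0 : ℝ) < 1 + 1 / ((n : ℝ) + 1) := by positivity
    rw [Complex.integral_cpow_mul_exp_neg_mul_Ioi ha hp, one_div, Complex.inv_cpow, Complex.cpow_neg]
    rw [Complex.arg_ofReal_of_nonneg hp.le]
    exact Real.pi_pos.ne

lemma re_u (x : ℝ) : (1 + I * (x : ℂ)).re = 1 := by simp
lemma re_v (x : ℝ) : (1 - I * (x : ℂ)).re = 1 := by simp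
lemma u_ne (x : ℝ) : (1 + I * (x : ℂ)) ≠ 0 := by
  intro h; have := re_u x; rw [h] at this; simp at this
lemma v_ne (x : ℝ) : (1 - I * (x : ℂ)) ≠ 0 := by
  intro h; have := re_v x; rw [h] at this; simp at this
lemma u_slit (x : ℝ) : (1 + I * (x : ℂ)) ∈ slitPlane := Or.inl (by rw [re_u]; norm_num)
lemma v_slit (x : ℝ) : (1 - I * (x : ℂ)) ∈ slitPlane := Or.inl (by rw [re_v]; norm_num)
lemma norm_u (x : ℝ) : ‖1 + I * (x : ℂ)‖ = (1 + ‖x‖ ^ 2) ^ (1 / 2 : ℝ) := by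
  rw [← Real.sqrt_eq_rpow, Complex.norm_def, Complex.normSq_apply]; simp [sq]
lemma norm_v (x : ℝ) : ‖1 - I * (x : ℂ)‖ = (1 + ‖x‖ ^ 2) ^ (1 / 2 : ℝ) := by
  rw [← Real.sqrt_eq_rpow, Complex.norm_def, Complex.normSq_apply]; simp [sq]

lemma cpow_bound (z w : ℂ) : ‖z ^ w‖ ≤ ‖z‖ ^ w.re * Real.exp (Real.pi * |w.im|) := by
  refine (Complex.norm_cpow_le z w).trans ?_
  rw [div_eq_mul_inv, ← Real.exp_neg]
  gcongr
  calc -(z.arg * w.im) ≤ |z.arg * w.im| := neg_le_abs _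
    _ = |z.arg| * |w.im| := abs_mul _ _
    _ ≤ _ := by gcongr; exact Complex.abs_arg_le_pi z

lemma uv_bound (a b : ℂ) : ∃ C : ℝ, ∀ x : ℝ,
    ‖(1 + I * (x : ℂ)) ^ (-a) * (1 - I * (x : ℂ)) ^ (-b)‖ ≤
      C * (1 + ‖x‖ ^ 2) ^ (-(a.re + b.re) / 2) := by
  refine ⟨Real.exp (Real.pi * |(-a).im|) * Real.exp (Real.pi * |(-b).im|), fun x => ?_⟩
  rw [norm_mul]
  refine (mul_le_mul (cpow_bound _ _) (cpow_bound _ _) (norm_nonneg _) (by positivity)).trans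
    (le_of_eq ?_)
  have hp : 0 < 1 + ‖x‖ ^ 2 := by positivity
  rw [norm_u, norm_v, ← Real.rpow_mul hp.le, ← Real.rpow_mul hp.le,
    show -(a.re + b.re) / 2 = 1 / 2 * (-a).re + 1 / 2 * (-b).re by simp; ring,
    Real.rpow_add hp]
  ring

lemma uv_cont (a b : ℂ) : Continuous fun x : ℝ =>
    (1 + I * (x : ℂ)) ^ (-a) * (1 - I * (x : ℂ)) ^ (-b) := by
  apply Continuous.mul
  · exact Continuous.cpow (by fun_prop) (by fun_prop) u_slit
  · exact Continuous.cpow (by fun_prop) (by fun_prop) v_slit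

lemma uv_int (a b : ℂ) (h : 1 < a.re + b.re) : Integrable fun x : ℝ =>
    (1 + I * (x : ℂ)) ^ (-a) * (1 - I * (x : ℂ)) ^ (-b) := by
  obtain ⟨C, hC⟩ := uv_bound a b
  refine Integrable.mono' ((integrable_rpow_neg_one_add_norm_sq (E := ℝ) (μ := volume)
    (r := a.re + b.re) (by simpa using h)).const_mul C) (uv_cont a b).aestronglyMeasurable
    (Filter.Eventually.of_forall hC)

lemma uv_tendsto (a b : ℂ) (h : 0 < a.re + b.re) (l : Filter ℝ)
    (hl : Filter.Tendsto (fun x : ℝ => ‖x‖) l Filter.atTop) :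
    Filter.Tendsto (fun x : ℝ =>
    (1 + I * (x : ℂ)) ^ (-a) * (1 - I * (x : ℂ)) ^ (-b)) l (nhds 0) := by
  obtain ⟨C, hC⟩ := uv_bound a b
  apply squeeze_zero_norm hC
  rw [show (0 : ℝ) = C * 0 by simp]
  apply Filter.Tendsto.const_mul
  have h1 : Filter.Tendsto (fun x : ℝ => 1 + ‖x‖ ^ 2) l Filter.atTop :=
    Filter.tendsto_atTop_add_const_left _ _ ((Filter.tendsto_pow_atTop two_ne_zero).comp hl)
  have h2 := (tendsto_rpow_neg_atTop (y := (a.re + b.re) / 2) (by linarith)).comp h1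
  rw [show -(a.re + b.re) / 2 = -((a.re + b.re) / 2) by ring]
  exact h2

lemma cpow_add_one' (z w : ℂ) (hz : z ≠ 0) : z ^ (w + 1) = z ^ w * z := by
  rw [Complex.cpow_add _ _ hz, Complex.cpow_one]

lemma F_rec (a b : ℂ) (h : 1 < a.re + b.re) :
    2 * a * ∫ x : ℝ, (1 + I * (x : ℂ)) ^ (-(a + 1)) * (1 - I * (x : ℂ)) ^ (-b) =
    (a + b - 1) * ∫ x : ℝ, (1 + I * (x : ℂ)) ^ (-a) * (1 - I * (x : ℂ)) ^ (-b) := by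
  have i1 := (uv_int (a + 1) b (by simp; linarith)).const_mul (2 * a)
  have i2 := (uv_int a b h).const_mul (a + b - 1)
  have hd : ∀ x : ℝ, HasDerivAt (fun x : ℝ => I * ((1 + I * (x : ℂ)) ^ (-a) *
      (1 - I * (x : ℂ)) ^ (-(b - 1))))
      (2 * a * ((1 + I * (x : ℂ)) ^ (-(a + 1)) * (1 - I * (x : ℂ)) ^ (-b)) -
      (a + b - 1) * ((1 + I * (x : ℂ)) ^ (-a) * (1 - I * (x : ℂ)) ^ (-b))) x := by
    intro x
    have d0 : HasDerivAt (fun z : ℂ => I * z) I (x : ℂ) := by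
      simpa using (hasDerivAt_id (x : ℂ)).const_mul I
    have d1 := (d0.const_add 1).cpow_const (c := -a) (u_slit x)
    have d2 := (d0.const_sub 1).cpow_const (c := -(b - 1)) (v_slit x)
    have d3 := ((d1.mul d2).const_mul I).comp_ofReal
    refine HasDerivAt.congr_deriv d3 ?_
    symm
    have e1 : (1 + I * (x : ℂ)) ^ (-a) = (1 + I * (x : ℂ)) ^ (-(a + 1)) * (1 + I * (x : ℂ)) := by
      rw [← cpow_add_one' _ _ (u_ne x)]; congr 1; ring
    have e2 : (1 - I * (x : ℂ)) ^ (-(b - 1)) = (1 - I * (x : ℂ)) ^ (-b) * (1 - I * (x : ℂ)) := by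
      rw [← cpow_add_one' _ _ (v_ne x)]; congr 1; ring
    rw [show -a - 1 = -(a + 1) by ring, show -(b - 1) - 1 = -b by ring, e1, e2]
    linear_combination (-(1 + I * (x : ℂ)) ^ (-(a + 1)) * (1 - I * (x : ℂ)) ^ (-b) * (-a * (1 - I * (x : ℂ)) + (b - 1) * (1 + I * (x : ℂ)))) * I_sq
  have := integral_of_hasDerivAt_of_tendsto hd (i1.sub i2)
    ((uv_tendsto a (b - 1) (by simp; linarith) _ Filter.tendsto_abs_atBot_atTop).const_mul I)
    ((uv_tendsto a (b - 1) (by simp; linarith) _ Filter.tendsto_abs_atTop_atTop).const_mul I)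
  rw [integral_sub i1 i2, integral_const_mul, integral_const_mul, sub_self, sub_eq_zero] at this
  exact this

noncomputable def fE (a : ℂ) : ℝ → ℂ :=
  Set.indicator (Set.Ioi 0) (fun t : ℝ => (t : ℂ) ^ (a - 1) * cexp (-(1 * t)))

lemma fE_int (a : ℂ) (ha : 0 < a.re) : Integrable (fE a) := by
  rw [fE, integrable_indicator_iff measurableSet_Ioi]
  exact aux_int _ _ (by simpa using ha) (by simp)

lemma fE_fourier (a : ℂ) (ha : 0 < a.re) (ξ : ℝ) :
    FourierTransform.fourier (fE a) ξ =
      (1 + I * ((2 * Real.pi * ξ : ℝ) : ℂ)) ^ (-a) * Complex.Gamma a := by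
  rw [← gamma_complex a _ ha (by rw [re_u]; norm_num), Real.fourier_eq',
    ← integral_indicator measurableSet_Ioi]
  congr 1
  ext t
  by_cases ht : t ∈ Set.Ioi (0 : ℝ)
  · simp only [fE, Set.indicator_of_mem ht, smul_eq_mul]
    rw [mul_left_comm, ← Complex.exp_add]
    congr 2
    simp
    ring
  · simp only [fE, Set.indicator_of_notMem ht, smul_zero]

lemma fE_cont (m : ℕ) : Continuous (fE ((m : ℂ) + 2)) := by
  have : fE ((m : ℂ) + 2) = fun t : ℝ => ((max t 0 : ℝ) : ℂ) ^ (m + 1) * cexp (-(1 * t)) := by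
    ext t
    by_cases ht : 0 < t
    · rw [fE, Set.indicator_of_mem (by exact ht), max_eq_left ht.le, ← Complex.cpow_natCast]
      congr 2
      push_cast; ring
    · rw [fE, Set.indicator_of_notMem (by exact ht), max_eq_right (not_lt.1 ht)]
      simp
  rw [this]
  fun_prop

lemma F_pos (a : ℂ) (ha : 0 < a.re) (m : ℕ) :
    ∫ x : ℝ, (1 + I * (x : ℂ)) ^ (-a) * (1 - I * (x : ℂ)) ^ (-((m : ℂ) + 2)) =
    2 * Real.pi * (2 : ℂ) ^ (-(a + m + 1)) * Complex.Gamma (a + m + 1) /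
      (Complex.Gamma a * Complex.Gamma ((m : ℂ) + 2)) := by
  set b : ℂ := (m : ℂ) + 2 with hb
  have hbre : b.re = (m : ℝ) + 2 := by simp [hb]
  have hb0 : 0 < b.re := by rw [hbre]; positivity
  have hGa := Complex.Gamma_ne_zero_of_re_pos ha
  have hGb := Complex.Gamma_ne_zero_of_re_pos hb0
  have hfi : Integrable (FourierTransform.fourier (fE b)) := by
    have h1 : Integrable (fun x : ℝ => (1 + I * (x : ℂ)) ^ (-b)) := by
      have := uv_int b 0 (by rw [hbre]; simp; linarith [(Nat.cast_nonneg m : (0 : ℝ) ≤ m)])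
      simpa using this
    have h2 := (h1.comp_mul_left' (R := 2 * Real.pi) (by positivity)).mul_const (Complex.Gamma b)
    refine h2.congr (Filter.Eventually.of_forall fun ξ => ?_)
    rw [fE_fourier b hb0]
  have hinv := Continuous.fourierInv_fourier_eq (fE_cont m) (fE_int b hb0) hfi
  rw [Real.fourierInv_eq_fourier_comp_neg] at hinv
  have hg : Integrable (fun ξ : ℝ => FourierTransform.fourier (fE b) (-ξ)) := hfi.comp_neg
  have flip : ∫ ξ : ℝ, FourierTransform.fourier (fE a) ξ • FourierTransform.fourier (fE b) (-ξ) =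
      ∫ t : ℝ, fE a t • FourierTransform.fourier (fun ξ : ℝ => FourierTransform.fourier (fE b) (-ξ)) t := by
    simpa using! (VectorFourier.integral_fourierIntegral_smul_eq_flip (L := innerₗ ℝ)
      Real.continuous_fourierChar continuous_inner (fE_int a ha) hg)
  rw [hinv] at flip
  have hr : ∫ t : ℝ, fE a t • fE b t = (1 / (2 : ℝ) : ℂ) ^ (a + m + 1) * Complex.Gamma (a + m + 1) := by
    rw [← Complex.integral_cpow_mul_exp_neg_mul_Ioi (r := 2)
      (by simp; positivity) (by norm_num), ← integral_indicator measurableSet_Ioi]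
    congr 1
    ext t
    by_cases ht : t ∈ Set.Ioi (0 : ℝ)
    · have ht' : (t : ℂ) ≠ 0 := by exact_mod_cast (ne_of_gt ht)
      simp only [fE, Set.indicator_of_mem ht, smul_eq_mul]
      rw [mul_mul_mul_comm, ← Complex.exp_add, ← Complex.cpow_add _ _ ht']
      congr 2
      · rw [hb]; ring
      · push_cast; ring
    · simp only [fE, Set.indicator_of_notMem ht, smul_zero]
  have hl : ∫ ξ : ℝ, FourierTransform.fourier (fE a) ξ • FourierTransform.fourier (fE b) (-ξ) =
      Complex.Gamma a * Complex.Gamma b * ((2 * (Real.pi : ℂ))⁻¹ *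
      ∫ x : ℝ, (1 + I * (x : ℂ)) ^ (-a) * (1 - I * (x : ℂ)) ^ (-b)) := by
    have := Measure.integral_comp_mul_left
      (fun x : ℝ => (1 + I * (x : ℂ)) ^ (-a) * (1 - I * (x : ℂ)) ^ (-b)) (2 * Real.pi)
    rw [abs_of_pos (by positivity), Complex.real_smul] at this
    push_cast at this
    rw [← this, ← integral_const_mul]
    congr 1
    ext ξ
    rw [fE_fourier a ha, fE_fourier b hb0, smul_eq_mul]
    push_cast
    rw [show 1 + I * (2 * (Real.pi : ℂ) * -(ξ : ℂ)) = 1 - I * (2 * (Real.pi : ℂ) * (ξ : ℂ)) by ring]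
    ring
  rw [hl, hr] at flip
  have h2 : ((1 : ℂ) / ((2 : ℝ) : ℂ)) ^ (a + m + 1) = (2 : ℂ) ^ (-(a + m + 1)) := by
    rw [one_div, Complex.inv_cpow, Complex.cpow_neg]
    · simp
    · rw [Complex.arg_ofReal_of_nonneg (by norm_num)]; exact Real.pi_pos.ne
  rw [h2] at flip
  have hpi : (Real.pi : ℂ) ≠ 0 := by exact_mod_cast Real.pi_ne_zero
  field_simp at flip ⊢
  linear_combination flip

lemma F_gen (a : ℂ) (ha : -1 < a.re) (m : ℕ) :
    ∫ x : ℝ, (1 + I * (x : ℂ)) ^ (-a) * (1 - I * (x : ℂ)) ^ (-((m : ℂ) + 2)) =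
    2 * Real.pi * (2 : ℂ) ^ (-(a + m + 1)) * Complex.Gamma (a + m + 1) /
      (Complex.Gamma a * Complex.Gamma ((m : ℂ) + 2)) := by
  have hm : (0 : ℝ) ≤ m := Nat.cast_nonneg m
  have h := F_rec a ((m : ℂ) + 2) (by simp; linarith)
  rw [F_pos (a + 1) (by simp; linarith) m] at h
  have hne : a + m + 1 ≠ 0 := by
    intro h0
    have := congrArg Complex.re h0
    simp at this
    linarith
  have e : a + ((m : ℂ) + 2) - 1 = a + m + 1 := by ring
  rw [e] at h
  apply mul_left_cancel₀ hne
  rw [← h]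
  have e1 : a + 1 + (m : ℂ) + 1 = (a + m + 1) + 1 := by ring
  have e2 : (2 : ℂ) ^ (-(a + m + 1)) = 2 ^ (-(a + m + 1 + 1)) * 2 := by
    rw [← cpow_add_one' _ _ two_ne_zero]; congr 1; ring
  rw [e1, Complex.Gamma_add_one _ hne, e2]
  by_cases h0 : a = 0
  · simp [h0, Complex.Gamma_zero]
  · rw [Complex.Gamma_add_one _ h0]
    have hG1 : Complex.Gamma (a + 1) ≠ 0 := Complex.Gamma_ne_zero_of_re_pos (by simp; linarith)
    rw [Complex.Gamma_add_one _ h0] at hG1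
    have hG : Complex.Gamma a ≠ 0 := right_ne_zero_of_mul hG1
    have hG2 : Complex.Gamma ((m : ℂ) + 2) ≠ 0 :=
      Complex.Gamma_ne_zero_of_re_pos (by simp; positivity)
    field_simp

lemma andreief (n : ℕ) (f g : Fin n → ℝ → ℂ)
    (h : ∀ i j, Integrable (fun x => f i x * g j x)) :
    Integrable (fun x : Fin n → ℝ => (Matrix.of fun m i => f i (x m)).det *
        (Matrix.of fun m i => g i (x m)).det) ∧
    ∫ x : Fin n → ℝ, (Matrix.of fun m i => f i (x m)).det *
        (Matrix.of fun m i => g i (x m)).det =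
      (n.factorial : ℂ) * (Matrix.of fun i j => ∫ x : ℝ, f i x * g j x).det := by
  have e : (fun x : Fin n → ℝ => (Matrix.of fun m i => f i (x m)).det *
        (Matrix.of fun m i => g i (x m)).det) = fun x => ∑ σ : Equiv.Perm (Fin n),
        ∑ τ : Equiv.Perm (Fin n), ((((Equiv.Perm.sign σ : ℤ)) : ℂ) * ((Equiv.Perm.sign τ : ℤ) : ℂ)) *
          ∏ m, (f (σ m) (x m) * g (τ m) (x m)) := by
    ext x
    rw [← Matrix.det_transpose, ← Matrix.det_transpose (Matrix.of fun m i => g i (x m)),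
      Matrix.det_apply', Matrix.det_apply', Finset.sum_mul_sum]
    refine Finset.sum_congr rfl fun σ _ => Finset.sum_congr rfl fun τ _ => ?_
    rw [Finset.prod_mul_distrib]
    simp only [Matrix.transpose_apply, Matrix.of_apply]
    ring
  have hi : ∀ σ τ : Equiv.Perm (Fin n), Integrable (fun x : Fin n → ℝ =>
      ((((Equiv.Perm.sign σ : ℤ)) : ℂ) * ((Equiv.Perm.sign τ : ℤ) : ℂ)) *
          ∏ m, (f (σ m) (x m) * g (τ m) (x m))) := fun σ τ =>
    (Integrable.fintype_prod (f := fun m x => f (σ m) x * g (τ m) x)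
      (fun m => h (σ m) (τ m))).const_mul _
  rw [e]
  refine ⟨integrable_finsetSum _ fun σ _ => integrable_finsetSum _ fun τ _ => hi σ τ, ?_⟩
  rw [integral_finsetSum _ fun σ _ => integrable_finsetSum _ fun τ _ => hi σ τ]
  have h2 : ∀ σ : Equiv.Perm (Fin n), (∫ x : Fin n → ℝ, ∑ τ : Equiv.Perm (Fin n),
      ((((Equiv.Perm.sign σ : ℤ)) : ℂ) * ((Equiv.Perm.sign τ : ℤ) : ℂ)) *
          ∏ m, (f (σ m) (x m) * g (τ m) (x m))) =
      (Matrix.of fun i j => ∫ x : ℝ, f i x * g j x).det := by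
    intro σ
    rw [integral_finsetSum _ fun τ _ => hi σ τ]
    have h3 : ((Equiv.Perm.sign σ : ℤ) : ℂ) * ((Equiv.Perm.sign σ : ℤ) : ℂ) = 1 := by
      rw [← Int.cast_mul, ← Units.val_mul, Int.units_mul_self]; simp
    rw [← one_mul (Matrix.det _), ← h3, mul_assoc, ← Matrix.det_permute, ← Matrix.det_transpose,
      Matrix.det_apply', Finset.mul_sum]
    refine Finset.sum_congr rfl fun τ _ => ?_
    rw [integral_const_mul, integral_fintype_prod_volume_eq_prod (fun m x => f (σ m) x * g (τ m) x)]
    simp [mul_assoc]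
  simp only [h2]
  simp [Fintype.card_perm]

lemma gamma_det (n : ℕ) (s : ℂ) (hs : 0 < s.re) :
    (Matrix.of fun i j : Fin n => Complex.Gamma (s + (i : ℕ) + (j : ℕ))).det =
      (∏ i : Fin n, Complex.Gamma (s + (i : ℕ))) * ∏ i : Fin n, ((i : ℕ).factorial : ℂ) := by
  have hp : ∀ i : ℕ, 0 < (s + i).re := fun i => by
    simp; positivity
  have e : (Matrix.of fun i j : Fin n => Complex.Gamma (s + (i : ℕ) + (j : ℕ))) =
      Matrix.of fun i j : Fin n => Complex.Gamma (s + (i : ℕ)) *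
        (Matrix.of fun i j : Fin n => (ascPochhammer ℂ (j : ℕ)).eval ((i : ℕ) + s)) i j := by
    ext i j
    simp only [Matrix.of_apply]
    rw [add_comm ((i : ℕ) : ℂ) s, ← Complex.Gamma_add_nat_div_Gamma_eq]
    · rw [mul_div_cancel₀ _ (Complex.Gamma_ne_zero_of_re_pos (hp i))]
    · intro m hm
      have h1 := hp i
      rw [hm] at h1
      simp at h1
      linarith [(Nat.cast_nonneg m : (0 : ℝ) ≤ m)]
  rw [e, Matrix.det_mul_column]
  congr 1
  rw [← Matrix.det_eval_matrixOfPolynomials_eq_det_vandermonde (fun i : Fin n => ((i : ℕ) : ℂ) + s)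
    (fun j => ascPochhammer ℂ (j : ℕ)) (fun i => ascPochhammer_natDegree _ _)
    (fun i => monic_ascPochhammer _ _), Matrix.det_vandermonde_add]
  rcases n with _ | n
  · simp
  · rw [Matrix.det_vandermonde_id_eq_superFactorial, Fin.prod_univ_eq_prod_range (fun i => ((i.factorial : ℕ) : ℂ)),
      ← Nat.cast_prod, Nat.prod_range_succ_factorial]

lemma vand_rev (n : ℕ) (z : Fin n → ℂ) (hz : ∀ m, z m ≠ 0) (c : ℂ) :
    (Matrix.of fun m i : Fin n => z m ^ (-(c + 2 + ((i : ℕ) : ℂ)))).det =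
      (∏ m, z m ^ (-c - ((n + 1 : ℕ) : ℂ))) *
        (((Equiv.Perm.sign (Fin.revPerm (n := n)) : ℤ) : ℂ) * (Matrix.vandermonde z).det) := by
  rw [← Matrix.det_permute', ← Matrix.det_mul_column]
  congr 1
  ext m i
  simp only [Matrix.of_apply, Matrix.submatrix_apply, id, Fin.revPerm_apply, Matrix.vandermonde_apply]
  rw [← Complex.cpow_natCast, ← Complex.cpow_add _ _ (hz m), Fin.val_rev,
    Nat.cast_sub (by omega)]
  congr 1
  push_cast
  ring

lemma M_det (n : ℕ) (hn : 1 ≤ n) (k : ℂ) (hk : -3 < k.re) :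
    (n.factorial : ℂ) * (Matrix.of fun i j : Fin n =>
      2 * Real.pi * (2 : ℂ) ^ (-((k + 2 + (i : ℕ)) + (j : ℕ) + 1)) *
        Complex.Gamma ((k + 2 + (i : ℕ)) + (j : ℕ) + 1) /
      (Complex.Gamma (k + 2 + (i : ℕ)) * Complex.Gamma (((j : ℕ) : ℂ) + 2))).det =
    ((2 * Real.pi : ℝ) : ℂ) ^ n *
          (2 : ℂ) ^ (-((((n + 1 : ℕ) : ℂ) - 1) * (k + ((n + 1 : ℕ) : ℂ) + 1))) *
          Complex.Gamma (((n + 1 : ℕ) : ℂ) + k + 1) / Complex.Gamma (k + 2) := by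
  have e : (Matrix.of fun i j : Fin n =>
      2 * Real.pi * (2 : ℂ) ^ (-((k + 2 + (i : ℕ)) + (j : ℕ) + 1)) *
        Complex.Gamma ((k + 2 + (i : ℕ)) + (j : ℕ) + 1) /
      (Complex.Gamma (k + 2 + (i : ℕ)) * Complex.Gamma (((j : ℕ) : ℂ) + 2))) =
      Matrix.of fun i j : Fin n =>
        (2 * Real.pi * (2 : ℂ) ^ (-(k + 3 + (i : ℕ))) / Complex.Gamma (k + 2 + (i : ℕ))) *
        (Matrix.of fun i j : Fin n => ((2 : ℂ) ^ (-((j : ℕ) : ℂ)) / ((((j : ℕ) + 1).factorial : ℕ) : ℂ)) *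
          (Matrix.of fun i j : Fin n => Complex.Gamma (k + 3 + (i : ℕ) + (j : ℕ))) i j) i j := by
    ext i j
    simp only [Matrix.of_apply]
    rw [show -((k + 2 + ((i : ℕ) : ℂ)) + ((j : ℕ) : ℂ) + 1) = -(k + 3 + ((i : ℕ) : ℂ)) + -((j : ℕ) : ℂ) by ring,
      Complex.cpow_add _ _ two_ne_zero,
      show (k + 2 + ((i : ℕ) : ℂ)) + ((j : ℕ) : ℂ) + 1 = k + 3 + ((i : ℕ) : ℂ) + ((j : ℕ) : ℂ) by ring,
      show ((j : ℕ) : ℂ) + 2 = (((j : ℕ) + 1 : ℕ) : ℂ) + 1 by push_cast; ring,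
      Complex.Gamma_nat_eq_factorial]
    ring
  rw [e, Matrix.det_mul_column, Matrix.det_mul_row, gamma_det n (k + 3) (by simp; linarith)]
  clear e
  simp only [Fin.prod_univ_eq_prod_range (fun i : ℕ => 2 * (Real.pi : ℂ) * (2 : ℂ) ^ (-(k + 3 + (i : ℂ))) / Complex.Gamma (k + 2 + (i : ℂ))),
    Fin.prod_univ_eq_prod_range (fun j : ℕ => (2 : ℂ) ^ (-(j : ℂ)) / (((j + 1).factorial : ℕ) : ℂ)),
    Fin.prod_univ_eq_prod_range (fun i : ℕ => Complex.Gamma (k + 3 + (i : ℂ))),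
    Fin.prod_univ_eq_prod_range (fun i : ℕ => ((i.factorial : ℕ) : ℂ))]
  induction n, hn using Nat.le_induction with
  | base =>
    simp
    ring_nf
  | succ n hn ih =>
    simp only [Finset.prod_range_succ]
    rw [Nat.factorial_succ]
    have hG : Complex.Gamma (k + 2 + (n : ℂ)) ≠ 0 := by
      apply Complex.Gamma_ne_zero_of_re_pos
      have : (1 : ℝ) ≤ n := by exact_mod_cast hn
      simp; linarith
    have hf : ((n.factorial : ℕ) : ℂ) ≠ 0 := by exact_mod_cast n.factorial_ne_zero
    have hn1 : (n : ℂ) + 1 ≠ 0 := by exact_mod_cast n.succ_ne_zero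
    have e1 : ((n + 1 : ℕ) : ℂ) + k + 1 = k + 2 + (n : ℂ) := by push_cast; ring
    have e2 : ((n + 1 + 1 : ℕ) : ℂ) + k + 1 = k + 3 + (n : ℂ) := by push_cast; ring
    have e3 : (2 : ℂ) ^ (-((((n + 1 + 1 : ℕ) : ℂ) - 1) * (k + ((n + 1 + 1 : ℕ) : ℂ) + 1))) =
        (2 : ℂ) ^ (-((((n + 1 : ℕ) : ℂ) - 1) * (k + ((n + 1 : ℕ) : ℂ) + 1))) *
          (2 ^ (-(k + 3 + (n : ℂ))) * 2 ^ (-(n : ℂ))) := by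
      rw [← Complex.cpow_add _ _ two_ne_zero, ← Complex.cpow_add _ _ two_ne_zero]
      congr 1
      push_cast
      ring
    rw [e1] at ih
    rw [e2, e3, pow_succ]
    set A := ∏ i ∈ Finset.range n, 2 * (Real.pi : ℂ) * (2 : ℂ) ^ (-(k + 3 + (i : ℂ))) / Complex.Gamma (k + 2 + (i : ℂ))
    set B := ∏ j ∈ Finset.range n, (2 : ℂ) ^ (-(j : ℂ)) / (((j + 1).factorial : ℕ) : ℂ)
    set C := ∏ i ∈ Finset.range n, Complex.Gamma (k + 3 + (i : ℂ))
    set D := ∏ i ∈ Finset.range n, ((i.factorial : ℕ) : ℂ)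
    set T := (2 : ℂ) ^ (-((((n + 1 : ℕ) : ℂ) - 1) * (k + ((n + 1 : ℕ) : ℂ) + 1)))
    set P := ((2 * Real.pi : ℝ) : ℂ) ^ n
    have ih' : (n.factorial : ℂ) * (A * (B * (C * D))) / Complex.Gamma (k + 2 + (n : ℂ)) =
        P * T / Complex.Gamma (k + 2) := by
      rw [ih]; field_simp
    rw [show P * ((2 * Real.pi : ℝ) : ℂ) * (T * (2 ^ (-(k + 3 + (n : ℂ))) * 2 ^ (-(n : ℂ)))) *
      Complex.Gamma (k + 3 + (n : ℂ)) / Complex.Gamma (k + 2) =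
      (P * T / Complex.Gamma (k + 2)) * (((2 * Real.pi : ℝ) : ℂ) * (2 ^ (-(k + 3 + (n : ℂ))) * 2 ^ (-(n : ℂ))) *
      Complex.Gamma (k + 3 + (n : ℂ))) by ring, ← ih']
    push_cast
    field_simp

/-- The specialization J(1,1,k+N,N,1,N−1) of Selberg's integral
used in the proof of Theorem 3.1. -/
theorem stmt_2 (N : ℕ) (hN : 2 ≤ N) (k : ℂ) (hk : -3 < k.re) :
    MeasureTheory.Integrable
      (fun x : Fin (N - 1) → ℝ =>
        (∏ j : Fin (N - 1), ∏ l ∈ Finset.Ioi j, (((x l - x j) ^ 2 : ℝ) : ℂ)) *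
          ∏ n : Fin (N - 1),
            (1 + Complex.I * x n) ^ (-k - (N : ℂ)) * (1 - Complex.I * x n) ^ (-(N : ℂ)))
      ∧
    (∫ x : Fin (N - 1) → ℝ,
        (∏ j : Fin (N - 1), ∏ l ∈ Finset.Ioi j, (((x l - x j) ^ 2 : ℝ) : ℂ)) *
          ∏ n : Fin (N - 1),
            (1 + Complex.I * x n) ^ (-k - (N : ℂ)) * (1 - Complex.I * x n) ^ (-(N : ℂ)))
      = ((2 * Real.pi : ℝ) : ℂ) ^ (N - 1) *
          (2 : ℂ) ^ (-(((N : ℂ) - 1) * (k + (N : ℂ) + 1))) *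
          Complex.Gamma ((N : ℂ) + k + 1) / Complex.Gamma (k + 2) := by
  obtain ⟨n, rfl⟩ : ∃ n, N = n + 1 := ⟨N - 1, by omega⟩
  have hn : 1 ≤ n := by omega
  rw [Nat.add_sub_cancel]
  have hF : ∀ i j : Fin n, Integrable (fun x : ℝ =>
      (1 + I * (x : ℂ)) ^ (-(k + 2 + ((i : ℕ) : ℂ))) *
        (1 - I * (x : ℂ)) ^ (-(0 + 2 + ((j : ℕ) : ℂ)))) := by
    intro i j
    apply uv_int
    simp
    have h1 : (0 : ℝ) ≤ ((i : ℕ) : ℝ) := Nat.cast_nonneg _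
    have h2 : (0 : ℝ) ≤ ((j : ℕ) : ℝ) := Nat.cast_nonneg _
    linarith
  have key := andreief n (fun i x => (1 + I * (x : ℂ)) ^ (-(k + 2 + ((i : ℕ) : ℂ))))
    (fun j x => (1 - I * (x : ℂ)) ^ (-(0 + 2 + ((j : ℕ) : ℂ)))) hF
  have e : (fun x : Fin n → ℝ =>
        (∏ j : Fin n, ∏ l ∈ Finset.Ioi j, (((x l - x j) ^ 2 : ℝ) : ℂ)) *
          ∏ m : Fin n, (1 + Complex.I * x m) ^ (-k - ((n + 1 : ℕ) : ℂ)) *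
            (1 - Complex.I * x m) ^ (-((n + 1 : ℕ) : ℂ))) =
      fun x : Fin n → ℝ =>
        (Matrix.of fun m i : Fin n => (1 + I * (x m : ℂ)) ^ (-(k + 2 + ((i : ℕ) : ℂ)))).det *
        (Matrix.of fun m j : Fin n => (1 - I * (x m : ℂ)) ^ (-(0 + 2 + ((j : ℕ) : ℂ)))).det := by
    ext x
    rw [vand_rev n (fun m => 1 + I * (x m : ℂ)) (fun m => u_ne _) k,
      vand_rev n (fun m => 1 - I * (x m : ℂ)) (fun m => v_ne _) 0]
    have h3 : ((Equiv.Perm.sign (Fin.revPerm (n := n)) : ℤ) : ℂ) *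
        ((Equiv.Perm.sign (Fin.revPerm (n := n)) : ℤ) : ℂ) = 1 := by
      rw [← Int.cast_mul, ← Units.val_mul, Int.units_mul_self]; simp
    have h4 : (∏ j : Fin n, ∏ l ∈ Finset.Ioi j, (((x l - x j) ^ 2 : ℝ) : ℂ)) =
        (Matrix.vandermonde fun m => 1 + I * (x m : ℂ)).det *
        (Matrix.vandermonde fun m => 1 - I * (x m : ℂ)).det := by
      rw [Matrix.det_vandermonde, Matrix.det_vandermonde, ← Finset.prod_mul_distrib]
      refine Finset.prod_congr rfl fun j _ => ?_
      rw [← Finset.prod_mul_distrib]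
      refine Finset.prod_congr rfl fun l _ => ?_
      push_cast
      linear_combination ((x l : ℂ) - x j) ^ 2 * I_sq
    rw [h4, Finset.prod_mul_distrib, neg_zero, zero_sub]
    linear_combination (-((∏ m : Fin n, (1 + I * (x m : ℂ)) ^ (-k - ((n + 1 : ℕ) : ℂ))) *
      (∏ m : Fin n, (1 - I * (x m : ℂ)) ^ (-((n + 1 : ℕ) : ℂ))) *
      ((Matrix.vandermonde fun m => 1 + I * (x m : ℂ)).det *
        (Matrix.vandermonde fun m => 1 - I * (x m : ℂ)).det))) * h3
  rw [e]
  refine ⟨key.1, key.2.trans ?_⟩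
  rw [← M_det n hn k hk]
  congr 2
  ext i j
  simp only [Matrix.of_apply]
  rw [← F_gen (k + 2 + ((i : ℕ) : ℂ)) (by
    simp
    have h1 : (0 : ℝ) ≤ ((i : ℕ) : ℝ) := Nat.cast_nonneg _
    linarith) j]
  rw [zero_add, add_comm (2 : ℂ) ((j : ℕ) : ℂ)]
end

section
/- Let X > 1, let E₁(z) = ∫_0^∞ e^{−z−t}/(z+t) dt for z ∈ ℂ not on the closed negative real axis, let u : ℝ → ℝ be a smooth (C^∞) nonnegative function supported in [1,e] with ∫ u(y) dy = 1, and set U(z) = ∫_1^e u(y) E₁(z log y) dy. Define F_X(ϑ) = −Log(1 − e^{−iϑ}) − Σ_{j∈ℤ} U(i(ϑ + 2πj) log X) for real ϑ with ϑ/(2π) ∉ ℤ. Then: (a) for each such ϑ the series over j converges absolutely; (b) F_X is Lebesgue-integrable on (−π,π); and (c) for every integer m, (1/(2π)) ∫_{−π}^{π} F_X(−ϑ) e^{−imϑ} dϑ equals 0 if m ≤ 0, and equals (1/m) ∫_{min(e^{m/log X}, e)}^{e} u(y) dy if m ≥ 1 (in particular it equals 0 for m ≥ log X). -/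
open MeasureTheory Complex

/-- The principal exponential integral `E₁(z) = ∫_0^∞ e^{−z−t}/(z+t) dt`. -/
noncomputable def expInt (z : ℂ) : ℂ := ∫ t in Set.Ioi (0 : ℝ), Complex.exp (-z - t) / (z + t)

/-- `U(z) = ∫_1^e u(y) E₁(z log y) dy`. -/
noncomputable def Ufun (u : ℝ → ℝ) (z : ℂ) : ℂ :=
  ∫ y in (1 : ℝ)..(Real.exp 1), (u y : ℂ) * expInt (z * Real.log y)

/-- `F_X(ϑ) = −Log(1 − e^{−iϑ}) − Σ_{j∈ℤ} U(i(ϑ + 2πj) log X)`. -/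
noncomputable def FX (u : ℝ → ℝ) (X : ℝ) (ϑ : ℝ) : ℂ :=
  -Complex.log (1 - Complex.exp (-(Complex.I * ϑ))) -
    ∑' j : ℤ, Ufun u (Complex.I * ((ϑ : ℂ) + 2 * Real.pi * j) * Real.log X)

open Filter Topology Set

lemma expInt_measurable : Measurable expInt := by
  have h : StronglyMeasurable (fun p : ℂ × ℝ => Complex.exp (-p.1 - p.2) / (p.1 + p.2)) := by
    apply Measurable.stronglyMeasurable
    fun_prop
  exact (MeasureTheory.StronglyMeasurable.integral_prod_right' (ν := volume.restrict (Set.Ioi (0:ℝ))) h).measurable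

lemma expInt_integrand_bound (z : ℂ) (hz : 0 ≤ z.re) (hi : z.im ≠ 0) (t : ℝ) :
    ‖Complex.exp (-z - t) / (z + t)‖ ≤ Real.exp (-t) / |z.im| := by
  rw [norm_div, Complex.norm_exp]
  have h1 : |z.im| ≤ ‖z + t‖ := by
    simpa using Complex.abs_im_le_norm (z + t)
  have h2 : 0 < |z.im| := abs_pos.mpr hi
  gcongr
  simp [hz]

lemma exp_neg_integrable : IntegrableOn (fun t : ℝ => Real.exp (-t)) (Ioi 0) := by
  simpa using integrableOn_exp_mul_Ioi (a := -1) (by norm_num) 0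

lemma expInt_bound (z : ℂ) (hz : 0 ≤ z.re) (hi : z.im ≠ 0) :
    ‖expInt z‖ ≤ 1 / |z.im| := by
  unfold expInt
  have h := norm_integral_le_of_norm_le (μ := volume.restrict (Ioi (0:ℝ)))
    (f := fun t : ℝ => Complex.exp (-z - t) / (z + t))
    (exp_neg_integrable.div_const |z.im|)
    (Eventually.of_forall (expInt_integrand_bound z hz hi))
  refine h.trans (le_of_eq ?_)
  rw [integral_div]
  have := integral_exp_neg_Ioi 0
  simp [this]

lemma expInt_tendsto (a c : ℝ) (ha : a ≠ 0) (hc : 0 < c) :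
    Tendsto (fun ε : ℝ => expInt (((ε:ℂ) + Complex.I * a) * c)) (𝓝[>] 0)
      (𝓝 (expInt ((Complex.I * a) * c))) := by
  unfold expInt
  apply tendsto_integral_filter_of_dominated_convergence (fun t => Real.exp (-t) / |a * c|)
  · refine Eventually.of_forall fun ε => ?_
    apply Measurable.aestronglyMeasurable
    fun_prop
  · filter_upwards [self_mem_nhdsWithin] with ε hε
    refine Eventually.of_forall fun t => ?_
    have := expInt_integrand_bound (((ε:ℂ) + Complex.I * a) * c)
      (by simp; exact (mul_pos hε hc).le) (by simp [ha, hc.ne']) t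
    simpa using this
  · exact exp_neg_integrable.div_const _
  · refine Eventually.of_forall fun t => ?_
    have : ContinuousAt (fun ε : ℝ => Complex.exp (-(((ε:ℂ) + Complex.I * a) * c) - t) / (((ε:ℂ) + Complex.I * a) * c + t)) 0 := by
      apply ContinuousAt.div
      · fun_prop
      · fun_prop
      · intro h
        have := congrArg Complex.im h
        simp [ha, hc.ne'] at this
    have h2 := this.tendsto.mono_left (nhdsWithin_le_nhds (s := Ioi 0))
    simpa using h2

lemma expInt_eq (z : ℂ) (hz : 0 < z.re) :
    expInt z = ∫ v in Ioi (1:ℝ), Complex.exp (-z * v) / v := by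
  have h1 : ∀ t ∈ Ioi (0:ℝ), Complex.exp (-z - t) / (z + t)
      = ∫ v in Ioi (1:ℝ), Complex.exp (-(z + t) * v) := by
    intro t ht
    have ht' : 0 < t := ht
    rw [integral_exp_mul_complex_Ioi (by simp; linarith) 1]
    have : z + t ≠ 0 := by
      intro h
      have := congrArg Complex.re h
      simp at this
      linarith
    simp only [Complex.ofReal_one, mul_one, div_neg, neg_div, neg_neg]
    congr 2
    ring
  unfold expInt
  rw [setIntegral_congr_fun measurableSet_Ioi h1]
  rw [integral_integral_swap]
  · apply setIntegral_congr_fun measurableSet_Ioi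
    intro v hv
    have hv' : (1:ℝ) < v := hv
    have h2 : ∀ t : ℝ, Complex.exp (-(z + t) * v) = Complex.exp (-z * v) * Complex.exp (-(v:ℂ) * t) := by
      intro t
      rw [← Complex.exp_add]
      ring_nf
    simp only [h2]
    rw [integral_const_mul, integral_exp_mul_complex_Ioi (by simp; linarith) 0]
    simp [div_eq_mul_inv]
  · have hb : Integrable (fun p : ℝ × ℝ => Real.exp (-p.1) * Real.exp (-z.re * p.2))
        ((volume.restrict (Ioi 0)).prod (volume.restrict (Ioi 1))) := by
      apply Integrable.mul_prod (f := fun t : ℝ => Real.exp (-t)) (g := fun t : ℝ => Real.exp (-z.re * t))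
      · exact exp_neg_integrable
      · exact integrableOn_exp_mul_Ioi (by simpa using hz) 1
    refine hb.mono' ?_ ?_
    · apply Measurable.aestronglyMeasurable
      unfold Function.uncurry
      fun_prop
    · rw [Measure.prod_restrict]
      filter_upwards [ae_restrict_mem (measurableSet_Ioi.prod measurableSet_Ioi)] with p hp
      have h3 : 0 < p.1 := hp.1
      have h4 : 1 < p.2 := hp.2
      rw [Function.uncurry, Complex.norm_exp, ← Real.exp_add]
      apply Real.exp_le_exp.mpr
      simp
      nlinarith

lemma expInt_eq' (z : ℂ) (hz : 0 < z.re) (c : ℝ) (hc : 0 < c) :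
    expInt (z * c) = ∫ w in Ici c, Complex.exp (-z * w) / w := by
  rw [expInt_eq _ (by simp; positivity), integral_Ici_eq_integral_Ioi]
  have := integral_comp_mul_left_Ioi' (fun w : ℝ => Complex.exp (-z * w) / w) 1 hc
  rw [mul_one] at this
  rw [← this, ← integral_smul]
  apply setIntegral_congr_fun measurableSet_Ioi
  intro v hv
  have hv' : (1:ℝ) < v := hv
  have : (c:ℂ) ≠ 0 := by exact_mod_cast hc.ne'
  simp only [Complex.real_smul, Complex.ofReal_mul]
  rw [show -(z * c) * v = -z * (c * v) by ring]
  field_simp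

lemma bdd_mul_exp_integrable (z : ℂ) (hz : 0 < z.re) (f : ℝ → ℝ) (B : ℝ)
    (hc : ContinuousOn f (Ioi 0)) (hB : ∀ w ∈ Ioi (0:ℝ), |f w| ≤ B) :
    IntegrableOn (fun w : ℝ => (f w : ℂ) * Complex.exp (-z * w)) (Ioi 0) := by
  have h1 := (integrableOn_exp_mul_complex_Ioi (a := -z) (by simpa using hz) 0)
  apply Integrable.bdd_mul (c := B) h1
  · exact (Complex.continuous_ofReal.comp_continuousOn hc).aestronglyMeasurable measurableSet_Ioi
  · filter_upwards [ae_restrict_mem measurableSet_Ioi] with w hw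
    simpa using hB w hw

lemma ibp_step (z : ℂ) (hz : 0 < z.re) (f f' : ℝ → ℝ) (B : ℝ)
    (hd : ∀ w ∈ Ioi (0:ℝ), HasDerivAt f (f' w) w)
    (hc : ContinuousOn f' (Ioi 0)) (hB : ∀ w ∈ Ioi (0:ℝ), |f w| ≤ B)
    (hB' : ∀ w ∈ Ioi (0:ℝ), |f' w| ≤ B) (h0 : Tendsto f (𝓝[>] 0) (𝓝 0)) :
    z * ∫ w in Ioi (0:ℝ), (f w : ℂ) * Complex.exp (-z * w)
      = ∫ w in Ioi (0:ℝ), (f' w : ℂ) * Complex.exp (-z * w) := by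
  have hfc : ContinuousOn f (Ioi 0) := fun w hw => (hd w hw).continuousAt.continuousWithinAt
  have key := integral_Ioi_mul_deriv_eq_deriv_mul (a := (0:ℝ)) (a' := (0:ℂ)) (b' := 0)
    (u := fun w : ℝ => (f w : ℂ)) (u' := fun w : ℝ => (f' w : ℂ))
    (v := fun w : ℝ => Complex.exp (-z * w)) (v' := fun w : ℝ => -z * Complex.exp (-z * w))
    (fun w hw => (hd w hw).ofReal_comp)
    (fun w hw => by
      have : HasDerivAt (fun w : ℝ => -z * (w:ℂ)) (-z) w := by
        simpa using (Complex.ofRealCLM.hasDerivAt (x := w)).const_mul (-z)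
      have h2 := this.cexp
      rwa [mul_comm] at h2)
    (by
      have := (bdd_mul_exp_integrable z hz f B hfc hB).const_mul (-z)
      refine IntegrableOn.congr_fun this (fun w _ => ?_) measurableSet_Ioi
      simp; ring)
    (bdd_mul_exp_integrable z hz f' B hc hB')
    (by
      have h1 : Tendsto (fun w : ℝ => Complex.exp (-z * w)) (𝓝[>] 0) (𝓝 1) := by
        have : Continuous (fun w : ℝ => Complex.exp (-z * w)) := by fun_prop
        have h2 := (this.tendsto 0).mono_left (nhdsWithin_le_nhds (s := Ioi 0))
        simpa using h2
      have h3 := ((Complex.continuous_ofReal.tendsto 0).comp h0).mul h1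
      simpa [Pi.mul_def] using h3)
    (by
      rw [tendsto_zero_iff_norm_tendsto_zero]
      have h1 : Tendsto (fun w : ℝ => B * Real.exp (-(z.re * w))) atTop (𝓝 0) := by
        have : Tendsto (fun w : ℝ => Real.exp (-(z.re * w))) atTop (𝓝 0) :=
          Real.tendsto_exp_neg_atTop_nhds_zero.comp (tendsto_id.const_mul_atTop hz)
        simpa using this.const_mul B
      refine squeeze_zero' (Eventually.of_forall fun _ => norm_nonneg _) ?_ h1
      filter_upwards [eventually_gt_atTop 0] with w hw
      simp only [Pi.mul_apply, norm_mul, Complex.norm_exp, Complex.norm_real, Real.norm_eq_abs]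
      have := hB w hw
      simp only [neg_mul, neg_re, mul_re, ofReal_re, ofReal_im, mul_zero, sub_zero]
      gcongr)
  have e : (fun w : ℝ => (f w : ℂ) * (-z * Complex.exp (-z * w)))
      = fun w : ℝ => -z * ((f w : ℂ) * Complex.exp (-z * w)) := by
    funext w; ring
  rw [e, integral_const_mul] at key
  simp only [neg_mul, sub_zero, zero_sub, neg_inj] at key ⊢
  exact key

lemma laplace_bound (f f1 f2 : ℝ → ℝ) (B : ℝ)
    (hd : ∀ w ∈ Ioi (0:ℝ), HasDerivAt f (f1 w) w)
    (hd1 : ∀ w ∈ Ioi (0:ℝ), HasDerivAt f1 (f2 w) w)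
    (hc : ContinuousOn f2 (Ioi 0)) (hB : ∀ w ∈ Ioi (0:ℝ), |f w| ≤ B)
    (hB1 : ∀ w ∈ Ioi (0:ℝ), |f1 w| ≤ B) (hB2 : ∀ w ∈ Ioi (0:ℝ), |f2 w| ≤ B)
    (h0 : Tendsto f (𝓝[>] 0) (𝓝 0)) (h1 : Tendsto f1 (𝓝[>] 0) (𝓝 0))
    (hi : IntegrableOn f2 (Ioi 0)) :
    ∃ C : ℝ, 0 ≤ C ∧ ∀ z : ℂ, 0 < z.re →
      ‖∫ w in Ioi (0:ℝ), (f w : ℂ) * Complex.exp (-z * w)‖ ≤ C / ‖z‖ ^ 2 := by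
  refine ⟨∫ w in Ioi (0:ℝ), |f2 w|, integral_nonneg fun _ => abs_nonneg _, fun z hz => ?_⟩
  have hz0 : z ≠ 0 := by rintro rfl; simp at hz
  rw [le_div_iff₀ (by positivity), mul_comm, ← norm_pow, ← norm_mul, pow_two, mul_assoc,
    ibp_step z hz f f1 B hd (fun w hw => (hd1 w hw).continuousAt.continuousWithinAt) hB hB1 h0,
    ibp_step z hz f1 f2 B hd1 hc hB1 hB2 h1]
  apply norm_integral_le_of_norm_le hi.abs
  filter_upwards [ae_restrict_mem measurableSet_Ioi] with w hw
  have hw' : (0:ℝ) < w := hw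
  rw [norm_mul, Complex.norm_exp, Complex.norm_real, Real.norm_eq_abs]
  have : Real.exp (-z * w).re ≤ 1 := by
    apply Real.exp_le_one_iff.mpr
    simp
    positivity
  exact mul_le_of_le_one_right (abs_nonneg _) this

noncomputable def kf (u : ℝ → ℝ) (L w : ℝ) : ℝ := u (Real.exp (w / L)) * (Real.exp (w / L) / L)
noncomputable def hf (u : ℝ → ℝ) (L w : ℝ) : ℝ := ∫ y in (1:ℝ)..(Real.exp (w / L)), u y

section
variable {u : ℝ → ℝ} (hu : ContDiff ℝ (⊤ : ℕ∞) u)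
  (hs : Function.support u ⊆ Set.Icc 1 (Real.exp 1)) (hm : (∫ y : ℝ, u y) = 1)
  {L : ℝ} (hL : 0 < L)

include hu hs in
lemma u_zero_left (y : ℝ) (hy : y ≤ 1) : u y = 0 := by
  have h : EqOn u 0 (closure (Iio 1)) := by
    apply Set.EqOn.closure _ hu.continuous continuous_zero
    intro x hx
    by_contra hne
    exact absurd (hs hne).1 (not_le.mpr hx)
  rw [closure_Iio] at h
  exact h hy

include hu hs in
lemma u_zero_right (y : ℝ) (hy : Real.exp 1 ≤ y) : u y = 0 := by
  have h : EqOn u 0 (closure (Ioi (Real.exp 1))) := by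
    apply Set.EqOn.closure _ hu.continuous continuous_zero
    intro x hx
    by_contra hne
    exact absurd (hs hne).2 (not_le.mpr hx)
  rw [closure_Ioi] at h
  exact h hy

include hu hs hL in
lemma kf_zero_left (w : ℝ) (hw : w ≤ 0) : kf u L w = 0 := by
  unfold kf
  rw [u_zero_left hu hs, zero_mul]
  exact Real.exp_le_one_iff.mpr (div_nonpos_of_nonpos_of_nonneg hw hL.le)

include hu hs hL in
lemma kf_zero_right (w : ℝ) (hw : L ≤ w) : kf u L w = 0 := by
  unfold kf
  rw [u_zero_right hu hs, zero_mul]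
  apply Real.exp_le_exp.mpr
  rwa [le_div_iff₀ hL, one_mul]

include hu in
lemma kf_smooth : ContDiff ℝ (⊤ : ℕ∞) (kf u L) := by
  unfold kf
  fun_prop

include hu in
lemma hf_deriv (w : ℝ) : HasDerivAt (hf u L) (kf u L w) w := by
  have h1 : HasDerivAt (fun w : ℝ => Real.exp (w / L)) (Real.exp (w / L) * (1 / L)) w :=
    ((hasDerivAt_id w).div_const L).exp
  have h2 := (hu.continuous.integral_hasStrictDerivAt 1 (Real.exp (w/L))).hasDerivAt
  have h3 := h2.comp w h1
  exact h3.congr_deriv (by unfold kf; ring)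

include hu hs hL in
lemma hf_zero (w : ℝ) (hw : w ≤ 0) : hf u L w = 0 := by
  unfold hf
  rw [intervalIntegral.integral_congr (g := fun _ => 0)]
  · simp
  · intro y hy
    have : Real.exp (w / L) ≤ 1 :=
      Real.exp_le_one_iff.mpr (div_nonpos_of_nonpos_of_nonneg hw hL.le)
    rw [uIcc_of_ge this] at hy
    exact u_zero_left hu hs y hy.2

include hu hs hm in
lemma int_u_one : ∫ y in (1:ℝ)..(Real.exp 1), u y = 1 := by
  refine Eq.trans ?_ hm
  rw [intervalIntegral.integral_eq_integral_of_support_subset]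
  intro y hy
  refine ⟨?_, (hs hy).2⟩
  by_contra h
  exact hy (u_zero_left hu hs y (not_lt.mp h))

include hu hs hm hL in
lemma hf_one (w : ℝ) (hw : L ≤ w) : hf u L w = 1 := by
  unfold hf
  have hi : ∀ a b, IntervalIntegrable u volume a b := fun a b => hu.continuous.intervalIntegrable a b
  rw [← intervalIntegral.integral_add_adjacent_intervals (hi 1 (Real.exp 1)) (hi _ _), int_u_one hu hs hm,
    intervalIntegral.integral_congr (g := fun _ => 0)]
  · simp
  · intro y hy
    have : Real.exp 1 ≤ Real.exp (w / L) := by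
      apply Real.exp_le_exp.mpr
      rwa [le_div_iff₀ hL, one_mul]
    rw [uIcc_of_le this] at hy
    exact u_zero_right hu hs y hy.1

include hu hs hL in
lemma kf_deriv_zero_left (w : ℝ) (hw : w ≤ 0) : deriv (kf u L) w = 0 := by
  have hk := kf_smooth (L := L) hu
  have hc : Continuous (deriv (kf u L)) := hk.continuous_deriv (by simp)
  have h : EqOn (deriv (kf u L)) 0 (closure (Iio 0)) := by
    apply Set.EqOn.closure _ hc continuous_zero
    intro x hx
    have : kf u L =ᶠ[𝓝 x] fun _ => 0 := by
      filter_upwards [Iio_mem_nhds hx] with y hy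
      exact kf_zero_left hu hs hL y (le_of_lt hy)
    rw [this.deriv_eq]; simp
  rw [closure_Iio] at h
  exact h hw

lemma mv_bound (f f' : ℝ → ℝ) (M : ℝ) (n : ℕ) (hM : 0 ≤ M) (hd : ∀ w, HasDerivAt f (f' w) w)
    (h0 : f 0 = 0) (hb : ∀ w, 0 ≤ w → |f' w| ≤ M * w ^ n) :
    ∀ w, 0 ≤ w → |f w| ≤ M * w ^ (n + 1) := by
  intro w hw
  have := norm_image_sub_le_of_norm_deriv_le_segment' (f := f) (f' := f') (a := 0) (b := w)
    (C := M * w ^ n) (fun x _ => (hd x).hasDerivWithinAt)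
    (fun x hx => (hb x hx.1).trans (by
      have := hx.1
      have := hx.2.le
      gcongr)) w ⟨hw, le_rfl⟩
  rw [h0, sub_zero, sub_zero] at this
  rw [pow_succ, ← mul_assoc]
  exact this

include hu hs hL in
lemma kh_bounds : ∃ M : ℝ, 0 ≤ M ∧ (∀ w, 0 ≤ w → |deriv (kf u L) w| ≤ M * w) ∧
    (∀ w, 0 ≤ w → |kf u L w| ≤ M * w ^ 2) ∧ (∀ w, 0 ≤ w → |hf u L w| ≤ M * w ^ 3) := by
  have hk := kf_smooth (L := L) hu
  have hk1 : ContDiff ℝ (⊤ : ℕ∞) (deriv (kf u L)) := by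
    have := (contDiff_infty_iff_deriv (f := kf u L)).mp hk
    exact this.2
  have hk2 : Continuous (deriv (deriv (kf u L))) := hk1.continuous_deriv (by simp)
  have hsupp : HasCompactSupport (kf u L) := by
    apply HasCompactSupport.intro (K := Icc 0 L) isCompact_Icc
    intro x hx
    by_cases h : x ≤ 0
    · exact kf_zero_left hu hs hL x h
    · apply kf_zero_right hu hs hL x
      by_contra h'
      exact hx ⟨(not_le.mp h).le, (not_le.mp h').le⟩
  obtain ⟨M, hM⟩ := hk2.bounded_above_of_compact_support hsupp.deriv.deriv
  have hM0 : 0 ≤ M := (norm_nonneg _).trans (hM 0)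
  have b1 := mv_bound (deriv (kf u L)) (deriv (deriv (kf u L))) M 0 hM0
    (fun w => (hk1.differentiable (by simp) w).hasDerivAt) (kf_deriv_zero_left hu hs hL 0 le_rfl)
    (fun w _ => by simpa using hM w)
  have b2 := mv_bound (kf u L) (deriv (kf u L)) M 1 hM0
    (fun w => (hk.differentiable (by simp) w).hasDerivAt) (kf_zero_left hu hs hL 0 le_rfl)
    (by simpa using b1)
  have b3 := mv_bound (hf u L) (kf u L) M 2 hM0
    (hf_deriv hu) (hf_zero hu hs hL 0 le_rfl) (by simpa using b2)
  exact ⟨M, hM0, by simpa using b1, by simpa using b2, by simpa using b3⟩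

include hu hs hL in
lemma phi_continuous : Continuous (fun w : ℝ => hf u L w / w) := by
  obtain ⟨M, hM0, -, -, b3⟩ := kh_bounds hu hs hL
  have hc : Continuous (hf u L) := continuous_iff_continuousAt.mpr fun w => (hf_deriv hu w).continuousAt
  rw [continuous_iff_continuousAt]
  intro w
  by_cases hw : w = 0
  · subst hw
    change Tendsto (fun w => hf u L w / w) (𝓝 0) (𝓝 (hf u L 0 / 0))
    rw [div_zero]
    have : Tendsto (fun w : ℝ => M * w ^ 2) (𝓝 0) (𝓝 0) := by
      have h : Continuous (fun w : ℝ => M * w ^ 2) := by fun_prop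
      simpa using h.tendsto 0
    refine squeeze_zero_norm (fun w => ?_) this
    rcases le_or_gt w 0 with h | h
    · rw [hf_zero hu hs hL w h]; simp; positivity
    · rw [norm_div, Real.norm_eq_abs, Real.norm_eq_abs, abs_of_pos h, div_le_iff₀ h]
      have := b3 w h.le
      linarith [this]
  · exact hc.continuousAt.div continuousAt_id hw

include hu hs hm hL in
lemma phi_bound : ∃ B, ∀ w : ℝ, |hf u L w / w| ≤ B := by
  obtain ⟨M, hM0, -, -, b3⟩ := kh_bounds hu hs hL
  refine ⟨M * L ^ 2 + 1 / L, fun w => ?_⟩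
  rcases le_or_gt w 0 with h | h
  · rw [hf_zero hu hs hL w h]; simp; positivity
  rw [abs_div, abs_of_pos h]
  rcases le_or_gt L w with h' | h'
  · rw [hf_one hu hs hm hL w h', abs_one]
    have : 1 / w ≤ 1 / L := by gcongr
    have : 0 ≤ M * L ^ 2 := by positivity
    linarith
  · have : |hf u L w| / w ≤ M * L ^ 2 := by
      rw [div_le_iff₀ h]
      calc _ ≤ M * w ^ 3 := b3 w h.le
        _ = M * w ^ 2 * w := by ring
        _ ≤ _ := by gcongr
    have : 0 ≤ 1 / L := by positivity
    linarith

include hu hs hm hL in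
lemma phi_laplace_bound : ∃ C : ℝ, 0 ≤ C ∧ ∀ z : ℂ, 0 < z.re →
      ‖∫ w in Ioi (0:ℝ), ((hf u L w / w : ℝ) : ℂ) * Complex.exp (-z * w)‖ ≤ C / ‖z‖ ^ 2 := by
  obtain ⟨M, hM0, b1, b2, b3⟩ := kh_bounds hu hs hL
  have hk := kf_smooth (L := L) hu
  have hkc := hk.continuous
  have hk1c : Continuous (deriv (kf u L)) := hk.continuous_deriv (by simp)
  have hc : Continuous (hf u L) := continuous_iff_continuousAt.mpr fun w => (hf_deriv hu w).continuousAt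
  obtain ⟨B0, hB0⟩ := phi_bound hu hs hm hL
  set f1 : ℝ → ℝ := fun w => kf u L w / w - hf u L w / w ^ 2 with hf1
  set f2 : ℝ → ℝ := fun w => deriv (kf u L) w / w - 2 * kf u L w / w ^ 2 + 2 * hf u L w / w ^ 3 with hf2
  have c2 : ContinuousOn f2 (Ioi 0) := by
    have hne : ∀ w ∈ Ioi (0:ℝ), w ≠ 0 := fun w hw => ne_of_gt hw
    refine ContinuousOn.add (ContinuousOn.sub ?_ ?_) ?_
    · exact hk1c.continuousOn.div continuousOn_id hne
    · exact (by fun_prop : Continuous fun w => 2 * kf u L w).continuousOn.div (by fun_prop) (fun w hw => pow_ne_zero _ (hne w hw))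
    · exact (by fun_prop : Continuous fun w => 2 * hf u L w).continuousOn.div (by fun_prop) (fun w hw => pow_ne_zero _ (hne w hw))
  have f1w : ∀ w ∈ Ioi (0:ℝ), |f1 w| ≤ 2 * M * w := by
    intro w hw
    have hw' : 0 < w := hw
    have e1 : |kf u L w / w| ≤ M * w := by
      rw [abs_div, abs_of_pos hw', div_le_iff₀ hw']
      linarith [b2 w hw'.le]
    have e2 : |hf u L w / w ^ 2| ≤ M * w := by
      rw [abs_div, abs_of_pos (pow_pos hw' 2), div_le_iff₀ (pow_pos hw' 2)]
      linarith [b3 w hw'.le]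
    have := abs_sub (kf u L w / w) (hf u L w / w ^ 2)
    simp only [hf1]
    linarith
  have f2w : ∀ w ∈ Ioi (0:ℝ), |f2 w| ≤ 5 * M := by
    intro w hw
    have hw' : 0 < w := hw
    have e1 : |deriv (kf u L) w / w| ≤ M := by
      rw [abs_div, abs_of_pos hw', div_le_iff₀ hw']
      linarith [b1 w hw'.le]
    have e2 : |2 * kf u L w / w ^ 2| ≤ 2 * M := by
      rw [abs_div, abs_of_pos (pow_pos hw' 2), div_le_iff₀ (pow_pos hw' 2), abs_mul, abs_two]
      linarith [b2 w hw'.le]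
    have e3 : |2 * hf u L w / w ^ 3| ≤ 2 * M := by
      rw [abs_div, abs_of_pos (pow_pos hw' 3), div_le_iff₀ (pow_pos hw' 3), abs_mul, abs_two]
      linarith [b3 w hw'.le]
    simp only [hf2]
    rw [abs_le] at *
    constructor <;> linarith
  have hk1z : ∀ w, L < w → deriv (kf u L) w = 0 := by
    intro w hw
    have : kf u L =ᶠ[𝓝 w] fun _ => 0 := by
      filter_upwards [Ioi_mem_nhds hw] with y hy
      exact kf_zero_right hu hs hL y (le_of_lt hy)
    rw [this.deriv_eq]; simp
  have hMLL : (0:ℝ) ≤ 2 * M * L := by positivity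
  apply laplace_bound (fun w => hf u L w / w) f1 f2 (|B0| + 2 * M * L + 1 / L ^ 2 + 5 * M)
  · intro w hw
    have hw' : w ≠ 0 := ne_of_gt hw
    have := (hf_deriv (L := L) hu w).div (hasDerivAt_id w) hw'
    refine this.congr_deriv ?_
    simp only [hf1, id]
    field_simp
  · intro w hw
    have hw' : w ≠ 0 := ne_of_gt hw
    have d1 := ((hk.differentiable (by simp) w).hasDerivAt).div (hasDerivAt_id w) hw'
    have d2 := (hf_deriv (L := L) hu w).div (hasDerivAt_pow 2 w) (pow_ne_zero 2 hw')
    have := d1.sub d2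
    refine this.congr_deriv ?_
    simp only [hf2, id]
    field_simp
    ring
  · exact c2
  · intro w hw
    have := hB0 w
    have := le_abs_self B0
    have : 0 ≤ 1 / L ^ 2 := by positivity
    linarith
  · intro w hw
    have hw' : 0 < w := hw
    have : 0 ≤ 1 / L ^ 2 := by positivity
    have := abs_nonneg B0
    rcases le_or_gt w L with h | h
    · have := f1w w hw
      have : 2 * M * w ≤ 2 * M * L := by gcongr
      linarith
    · simp only [hf1]
      rw [kf_zero_right hu hs hL w h.le, hf_one hu hs hm hL w h.le]
      have : |(0:ℝ) / w - 1 / w ^ 2| ≤ 1 / L ^ 2 := by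
        rw [zero_div, zero_sub, abs_neg, abs_of_pos (by positivity)]
        gcongr
      linarith
  · intro w hw
    have := f2w w hw
    have : 0 ≤ 1 / L ^ 2 := by positivity
    have := abs_nonneg B0
    linarith
  · have := (phi_continuous hu hs hL).tendsto 0
    simp only [div_zero] at this
    exact this.mono_left nhdsWithin_le_nhds
  · have : Tendsto (fun w : ℝ => 2 * M * w) (𝓝[>] 0) (𝓝 0) := by
      have h : Continuous (fun w : ℝ => 2 * M * w) := by fun_prop
      have := (h.tendsto 0).mono_left (nhdsWithin_le_nhds (s := Ioi 0))
      simpa using this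
    refine squeeze_zero_norm' ?_ this
    filter_upwards [self_mem_nhdsWithin] with w hw
    exact f1w w hw
  · rw [← Ioc_union_Ioi_eq_Ioi hL.le]
    apply IntegrableOn.union
    · refine Integrable.mono' (g := fun _ => 5 * M) (integrable_const _) ?_ ?_
      · exact (c2.mono (fun x hx => hx.1)).aestronglyMeasurable measurableSet_Ioc
      · filter_upwards [ae_restrict_mem measurableSet_Ioc] with w hw
        exact f2w w hw.1
    · have := (integrableOn_Ioi_rpow_of_lt (a := -3) (by norm_num) hL).const_mul 2
      refine IntegrableOn.congr_fun this (fun w hw => ?_) measurableSet_Ioi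
      have hw' : L < w := hw
      have : 0 < w := hL.trans hw'
      simp only [hf2]
      rw [kf_zero_right hu hs hL w hw'.le, hf_one hu hs hm hL w hw'.le, hk1z w hw']
      rw [Real.rpow_neg this.le]
      norm_cast
      field_simp
      simp
end

section
variable {u : ℝ → ℝ} (hu : ContDiff ℝ (⊤ : ℕ∞) u)
  (hs : Function.support u ⊆ Set.Icc 1 (Real.exp 1)) (hm : (∫ y : ℝ, u y) = 1)
  {L : ℝ} (hL : 0 < L)

include hu hs in
lemma u_le_log : ∃ M : ℝ, 0 ≤ M ∧ ∀ y ∈ Ioc 1 (Real.exp 1), |u y| ≤ M * Real.log y := by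
  obtain ⟨M, hM0, -, b2, -⟩ := kh_bounds hu hs one_pos
  refine ⟨M, hM0, fun y hy => ?_⟩
  have hy0 : 0 < y := one_pos.trans hy.1
  have hl0 : 0 ≤ Real.log y := Real.log_nonneg hy.1.le
  have hl1 : Real.log y ≤ 1 := by
    rw [Real.log_le_iff_le_exp hy0]; exact hy.2
  have := b2 (Real.log y) hl0
  unfold kf at this
  rw [div_one, Real.exp_log hy0, div_one, abs_mul, abs_of_pos hy0] at this
  have h1 : |u y| * 1 ≤ |u y| * y := by
    have := hy.1.le
    gcongr
  have h2 : M * Real.log y ^ 2 ≤ M * Real.log y := by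
    gcongr
    nlinarith
  linarith

include hu hs hL in
lemma Ufun_eq (z : ℂ) (hz : 0 < z.re) :
    Ufun u (z * L) = ∫ w in Ioi (0:ℝ), ((hf u L w / w : ℝ) : ℂ) * Complex.exp (-z * w) := by
  obtain ⟨M, hM0, hM⟩ := u_le_log hu hs
  have he : (1:ℝ) ≤ Real.exp 1 := Real.one_le_exp (by norm_num)
  unfold Ufun
  rw [intervalIntegral.integral_of_le he]
  have h1 : ∀ y ∈ Ioc 1 (Real.exp 1), (u y : ℂ) * expInt (z * L * Real.log y)
      = ∫ w in Ioi (0:ℝ), (if L * Real.log y ≤ w then (u y : ℂ) * (Complex.exp (-z * w) / w) else 0) := by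
    intro y hy
    have hl : 0 < Real.log y := Real.log_pos hy.1
    have hc : 0 < L * Real.log y := mul_pos hL hl
    have e : z * L * (Real.log y : ℂ) = z * ((L * Real.log y : ℝ) : ℂ) := by push_cast; ring
    rw [e, expInt_eq' z hz _ hc, ← integral_const_mul]
    have : (fun w : ℝ => (if L * Real.log y ≤ w then (u y : ℂ) * (Complex.exp (-z * w) / w) else 0))
      = (Ici (L * Real.log y)).indicator (fun w : ℝ => (u y : ℂ) * (Complex.exp (-z * w) / w)) := by
      funext w
      simp [Set.indicator_apply]
    rw [this, setIntegral_indicator measurableSet_Ici]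
    rw [inter_eq_right.mpr]
    intro w hw
    exact hc.trans_le hw
  rw [setIntegral_congr_fun measurableSet_Ioc h1, integral_integral_swap]
  · apply setIntegral_congr_fun measurableSet_Ioi
    intro w hw
    have hw' : (0:ℝ) < w := hw
    have e2 : ∀ y ∈ Ioc 1 (Real.exp 1), (if L * Real.log y ≤ w then (u y : ℂ) * (Complex.exp (-z * w) / w) else 0)
        = ((Iic (Real.exp (w / L))).indicator (fun y => (u y : ℂ)) y) * (Complex.exp (-z * w) / w) := by
      intro y hy
      have hy0 : 0 < y := one_pos.trans hy.1
      have : L * Real.log y ≤ w ↔ y ≤ Real.exp (w / L) := by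
        rw [← Real.log_le_iff_le_exp hy0, le_div_iff₀ hL, mul_comm]
      by_cases h : L * Real.log y ≤ w
      · simp [h, this.mp h]
      · simp [h, mt this.mpr h]
    simp only
    rw [setIntegral_congr_fun measurableSet_Ioc e2, integral_mul_const,
      setIntegral_indicator measurableSet_Iic]
    have hh : ∫ y in Ioc 1 (Real.exp 1) ∩ Iic (Real.exp (w / L)), (u y : ℂ) = (hf u L w : ℂ) := by
      rw [integral_complex_ofReal]
      congr 1
      unfold hf
      rw [intervalIntegral.integral_of_le (Real.one_le_exp (by positivity))]
      symm
      apply setIntegral_eq_of_subset_of_forall_sdiff_eq_zero measurableSet_Ioc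
      · intro y hy
        exact ⟨hy.1.1, hy.2⟩
      · intro y hy
        apply u_zero_right hu hs
        by_contra h
        exact hy.2 ⟨⟨hy.1.1, (not_le.mp h).le⟩, hy.1.2⟩
    rw [hh]
    push_cast
    ring
  · have hb : Integrable (fun p : ℝ × ℝ => (M / L) * Real.exp (-z.re * p.2))
        ((volume.restrict (Ioc 1 (Real.exp 1))).prod (volume.restrict (Ioi 0))) := by
      apply Integrable.mul_prod (f := fun _ : ℝ => M / L) (g := fun t : ℝ => Real.exp (-z.re * t))
      · exact integrable_const _
      · exact integrableOn_exp_mul_Ioi (by simpa using hz) 0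
    refine hb.mono' ?_ ?_
    · apply Measurable.aestronglyMeasurable
      unfold Function.uncurry
      have := hu.continuous.measurable
      apply Measurable.ite
      · exact measurableSet_le (by fun_prop) (by fun_prop)
      · fun_prop
      · fun_prop
    · rw [Measure.prod_restrict]
      filter_upwards [ae_restrict_mem (measurableSet_Ioc.prod measurableSet_Ioi)] with p hp
      have hy : p.1 ∈ Ioc 1 (Real.exp 1) := hp.1
      have h4 : 0 < p.2 := hp.2
      rw [Function.uncurry]
      split_ifs with h
      · rw [norm_mul, norm_div, Complex.norm_exp, Complex.norm_real, Complex.norm_real,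
          Real.norm_eq_abs, Real.norm_eq_abs, abs_of_pos h4]
        have e3 : (-z * (p.2:ℂ)).re = -z.re * p.2 := by simp
        rw [e3, mul_div_assoc', div_le_iff₀ h4]
        have e4 : |u p.1| ≤ M / L * p.2 := by
          calc |u p.1| ≤ M * Real.log p.1 := hM _ hy
            _ = M / L * (L * Real.log p.1) := by field_simp
            _ ≤ _ := by gcongr
        calc |u p.1| * Real.exp (-z.re * p.2) ≤ M / L * p.2 * Real.exp (-z.re * p.2) := by gcongr
          _ = _ := by ring
      · rw [norm_zero]
        positivity

include hu hs hL in
lemma Ufun_tendsto (a : ℝ) (ha : a ≠ 0) :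
    Tendsto (fun ε : ℝ => Ufun u (((ε:ℂ) + Complex.I * a) * L)) (𝓝[>] 0)
      (𝓝 (Ufun u ((Complex.I * a) * L))) := by
  obtain ⟨M, hM0, hM⟩ := u_le_log hu hs
  have he : (1:ℝ) ≤ Real.exp 1 := Real.one_le_exp (by norm_num)
  unfold Ufun
  simp only [intervalIntegral.integral_of_le he]
  have hmeas := expInt_measurable
  have humeas := hu.continuous.measurable
  have e : ∀ (b : ℂ) (y : ℝ), b * L * (Real.log y : ℂ) = b * ((L * Real.log y : ℝ) : ℂ) := by
    intro b y; push_cast; ring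
  apply tendsto_integral_filter_of_dominated_convergence (fun _ => M / (|a| * L))
  · refine Eventually.of_forall fun ε => ?_
    apply Measurable.aestronglyMeasurable
    have h1 : Measurable (fun y : ℝ => expInt (((ε:ℂ) + Complex.I * a) * L * Real.log y)) :=
      hmeas.comp (by fun_prop)
    have h2 : Measurable (fun y : ℝ => (u y : ℂ)) := by fun_prop
    exact h2.mul h1
  · filter_upwards [self_mem_nhdsWithin] with ε hε
    filter_upwards [ae_restrict_mem measurableSet_Ioc] with y hy
    have hε' : (0:ℝ) < ε := hε
    have hl : 0 < Real.log y := Real.log_pos hy.1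
    have hc : 0 < L * Real.log y := mul_pos hL hl
    rw [e, norm_mul, Complex.norm_real, Real.norm_eq_abs]
    have := expInt_bound (((ε:ℂ) + Complex.I * a) * ((L * Real.log y : ℝ) : ℂ))
      (by rw [Complex.re_mul_ofReal]; simp; positivity) (by rw [Complex.im_mul_ofReal]; simp [ha, hL.ne', hl.ne'])
    have e5 : |(((ε:ℂ) + Complex.I * a) * ((L * Real.log y : ℝ) : ℂ)).im| = |a| * (L * Real.log y) := by
      rw [Complex.im_mul_ofReal, abs_mul, abs_of_pos hc]; simp
    rw [e5] at this
    have ha' : 0 < |a| := abs_pos.mpr ha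
    calc _ ≤ M * Real.log y * (1 / (|a| * (L * Real.log y))) := by
          gcongr
          exact hM y hy
      _ = _ := by field_simp
  · exact integrable_const _
  · filter_upwards [ae_restrict_mem measurableSet_Ioc] with y hy
    have hl : 0 < Real.log y := Real.log_pos hy.1
    have hc : 0 < L * Real.log y := mul_pos hL hl
    simp only [e]
    exact (expInt_tendsto a _ ha hc).const_mul _

include hu hs hm hL in
lemma Ufun_bound : ∃ C : ℝ, 0 ≤ C ∧
    (∀ z : ℂ, 0 < z.re → ‖Ufun u (z * L)‖ ≤ C / ‖z‖ ^ 2) ∧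
    (∀ a : ℝ, a ≠ 0 → ‖Ufun u ((Complex.I * a) * L)‖ ≤ C / |a| ^ 2) := by
  obtain ⟨C, hC0, hC⟩ := phi_laplace_bound hu hs hm hL
  have h1 : ∀ z : ℂ, 0 < z.re → ‖Ufun u (z * L)‖ ≤ C / ‖z‖ ^ 2 := by
    intro z hz
    rw [Ufun_eq hu hs hL z hz]
    exact hC z hz
  refine ⟨C, hC0, h1, fun a ha => ?_⟩
  refine le_of_tendsto (Ufun_tendsto hu hs hL a ha).norm ?_
  filter_upwards [self_mem_nhdsWithin] with ε hε
  refine (h1 _ (by simpa using hε)).trans ?_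
  have ha' : 0 < |a| := abs_pos.mpr ha
  have : |a| ≤ ‖(ε:ℂ) + Complex.I * a‖ := by
    simpa using Complex.abs_im_le_norm ((ε:ℂ) + Complex.I * a)
  gcongr
end

noncomputable def Sf (u : ℝ → ℝ) (L : ℝ) (m : ℕ) : ℂ :=
  (1 / (m : ℂ)) * ((∫ y in (min (Real.exp ((m:ℝ) / L)) (Real.exp 1))..(Real.exp 1), u y : ℝ) : ℂ)

section
variable {u : ℝ → ℝ} (hu : ContDiff ℝ (⊤ : ℕ∞) u)
  (hs : Function.support u ⊆ Set.Icc 1 (Real.exp 1)) (hm : (∫ y : ℝ, u y) = 1)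
  {L : ℝ} (hL : 0 < L)

include hu hs hm hL in
lemma phi_nat (m : ℕ) : ((hf u L m / m : ℝ) : ℂ) = 1 / (m:ℂ) - Sf u L m := by
  unfold Sf
  have : hf u L m = 1 - ∫ y in (min (Real.exp ((m:ℝ) / L)) (Real.exp 1))..(Real.exp 1), u y := by
    rcases le_or_gt L (m:ℝ) with h | h
    · rw [hf_one hu hs hm hL _ h, min_eq_right]
      · simp
      · apply Real.exp_le_exp.mpr
        rwa [le_div_iff₀ hL, one_mul]
    · rw [min_eq_left]
      · rw [eq_sub_iff_add_eq]
        unfold hf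
        have hi : ∀ a b, IntervalIntegrable u volume a b := fun a b => hu.continuous.intervalIntegrable a b
        rw [intervalIntegral.integral_add_adjacent_intervals (hi _ _) (hi _ _), int_u_one hu hs hm]
      · apply Real.exp_le_exp.mpr
        rw [div_le_iff₀ hL, one_mul]
        exact h.le
  rw [this]
  push_cast
  ring

include hL in
lemma Sf_zero (m : ℕ) (h : L ≤ m) : Sf u L m = 0 := by
  unfold Sf
  rw [min_eq_right]
  · simp
  · apply Real.exp_le_exp.mpr
    rwa [le_div_iff₀ hL, one_mul]

include hu hs hm hL in
lemma lhs_sum (N : ℕ) (hN : L ≤ N) (s : ℂ) (hs0 : 0 < s.re) :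
    HasSum (fun n : ℤ => ((hf u L (n:ℝ) / (n:ℝ) : ℝ) : ℂ) * Complex.exp (-s * ((n:ℝ):ℂ)))
      (-Complex.log (1 - Complex.exp (-s)) - ∑ m ∈ Finset.range N, Sf u L m * Complex.exp (-s * m)) := by
  have hinj : Function.Injective (Nat.cast : ℕ → ℤ) := Nat.cast_injective
  rw [← hinj.hasSum_iff]
  · have h1 : HasSum (fun n : ℕ => (Complex.exp (-s)) ^ n / n) (-Complex.log (1 - Complex.exp (-s))) := by
      apply Complex.hasSum_taylorSeries_neg_log
      rw [Complex.norm_exp]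
      simpa using hs0
    have h2 : HasSum (fun m : ℕ => Sf u L m * Complex.exp (-s * m))
        (∑ m ∈ Finset.range N, Sf u L m * Complex.exp (-s * m)) := by
      apply hasSum_sum_of_ne_finset_zero
      intro m hm'
      rw [Finset.mem_range, not_lt] at hm'
      rw [Sf_zero hL m (hN.trans (by exact_mod_cast hm')), zero_mul]
    have h3 := h1.sub h2
    refine h3.congr_fun fun m => ?_
    simp only [Function.comp, Int.cast_natCast]
    have e := phi_nat hu hs hm hL m
    rw [e, ← Complex.exp_nat_mul, mul_comm (m:ℂ) (-s)]
    push_cast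
    ring
  · intro n hn
    have : n < 0 := by
      by_contra h
      exact hn ⟨n.toNat, by simp; omega⟩
    rw [hf_zero hu hs hL]
    · simp
    · exact_mod_cast this.le

include hu hs hm hL in
lemma poisson (ϑ ε : ℝ) (hε : 0 < ε) :
    ∑' n : ℤ, ((hf u L (n:ℝ) / (n:ℝ) : ℝ) : ℂ) * Complex.exp (-((ε:ℂ) + Complex.I * ϑ) * ((n:ℝ):ℂ))
      = ∑' j : ℤ, Ufun u (((ε:ℂ) + Complex.I * ((ϑ + 2 * Real.pi * j : ℝ) : ℂ)) * L) := by
  obtain ⟨C, hC0, hC, -⟩ := Ufun_bound hu hs hm hL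
  obtain ⟨B, hB⟩ := phi_bound hu hs hm hL
  have hB0 : 0 ≤ B := (abs_nonneg _).trans (hB 0)
  set f : ℝ → ℂ := fun w => ((hf u L w / w : ℝ) : ℂ) * Complex.exp (-((ε:ℂ) + Complex.I * ϑ) * w) with hfd
  have hfc : Continuous f := by
    have := phi_continuous hu hs hL
    exact (Complex.continuous_ofReal.comp this).mul (by fun_prop)
  have hfz : ∀ w, w ≤ 0 → f w = 0 := by
    intro w hw
    simp [hfd, hf_zero hu hs hL w hw]
  have hF : ∀ x : ℝ, FourierTransform.fourier f x
      = Ufun u (((ε:ℂ) + Complex.I * ((ϑ + 2 * Real.pi * x : ℝ) : ℂ)) * L) := by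
    intro x
    rw [Real.fourier_real_eq_integral_exp_smul, Ufun_eq hu hs hL _ (by simpa using hε)]
    rw [← setIntegral_eq_integral_of_forall_compl_eq_zero (s := Ioi (0:ℝ))]
    · apply setIntegral_congr_fun measurableSet_Ioi
      intro w hw
      simp only [hfd, smul_eq_mul]
      rw [mul_left_comm, ← Complex.exp_add]
      congr 2
      push_cast
      ring
    · intro w hw
      rw [hfz w (by simpa using hw), smul_zero]
  have hO : f =O[cocompact ℝ] (fun x : ℝ => |x| ^ (-2:ℝ)) := by
    apply Asymptotics.IsBigO.of_bound (B * (2 / ε ^ 2))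
    refine Eventually.of_forall fun w => ?_
    rcases le_or_gt w 0 with h | h
    · rw [hfz w h, norm_zero]; positivity
    · simp only [hfd]
      rw [norm_mul, Complex.norm_exp, Complex.norm_real, Real.norm_eq_abs, Real.norm_eq_abs,
        abs_of_pos h, abs_of_pos (a := w ^ (-2:ℝ)) (by positivity), Real.rpow_neg h.le]
      have e3 : (-((ε:ℂ) + Complex.I * ϑ) * w).re = -(ε * w) := by simp
      rw [e3, Real.exp_neg]
      have q := Real.quadratic_le_exp_of_nonneg (x := ε * w) (by positivity)
      have q2 : (ε * w) ^ 2 / 2 ≤ Real.exp (ε * w) := by nlinarith [mul_pos hε h]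
      have q3 : (Real.exp (ε * w))⁻¹ ≤ ((ε * w) ^ 2 / 2)⁻¹ := by gcongr
      calc _ ≤ B * ((ε * w) ^ 2 / 2)⁻¹ := by
            gcongr
            exact hB w
        _ = _ := by
            norm_cast
            field_simp
  have hO2 : (FourierTransform.fourier f) =O[cocompact ℝ] (fun x : ℝ => |x| ^ (-2:ℝ)) := by
    apply Asymptotics.IsBigO.of_bound C
    have : ∀ᶠ x : ℝ in cocompact ℝ, |ϑ| + 1 ≤ |x| := by
      have := tendsto_norm_cocompact_atTop (E := ℝ)
      exact this.eventually_ge_atTop (|ϑ| + 1)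
    filter_upwards [this] with x hx
    have hx0 : 0 < |x| := by have := abs_nonneg ϑ; linarith
    rw [hF]
    refine (hC _ (by simpa using hε)).trans ?_
    rw [Real.norm_eq_abs, abs_of_pos (by positivity), Real.rpow_neg hx0.le, div_eq_mul_inv]
    have h1 : |x| ≤ ‖(ε:ℂ) + Complex.I * ((ϑ + 2 * Real.pi * x : ℝ) : ℂ)‖ := by
      have h2 := Complex.abs_im_le_norm ((ε:ℂ) + Complex.I * ((ϑ + 2 * Real.pi * x : ℝ) : ℂ))
      have h3 : ((ε:ℂ) + Complex.I * ((ϑ + 2 * Real.pi * x : ℝ) : ℂ)).im = ϑ + 2 * Real.pi * x := by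
        simp
      rw [h3] at h2
      refine le_trans ?_ h2
      have h4 : |2 * Real.pi * x| ≤ |ϑ + 2 * Real.pi * x| + |ϑ| := by
        have := abs_sub (ϑ + 2 * Real.pi * x) ϑ
        simpa using this
      rw [abs_mul, abs_of_pos Real.two_pi_pos] at h4
      nlinarith [Real.pi_gt_three]
    norm_cast
    gcongr
  have key := Real.tsum_eq_tsum_fourier_of_rpow_decay hfc (b := 2) (by norm_num) hO hO2 0
  simp only [zero_add] at key
  refine key.trans (tsum_congr fun j => ?_)
  rw [hF]
  simp

lemma summable_aux (ϑ C : ℝ) : Summable (fun j : ℤ => C / |ϑ + 2 * Real.pi * j| ^ 2) := by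
  have h := (Real.summable_one_div_int_add_rpow (ϑ / (2 * Real.pi)) 2).mpr (by norm_num)
  have h2 := h.mul_left (C / (2 * Real.pi) ^ 2)
  refine h2.congr fun j => ?_
  have e : ϑ + 2 * Real.pi * j = (2 * Real.pi) * (j + ϑ / (2 * Real.pi)) := by
    field_simp
    ring
  rw [e, abs_mul, abs_of_pos Real.two_pi_pos]
  norm_cast
  rw [mul_pow (2 * Real.pi) |_| 2, div_mul_div_comm, mul_one]

lemma shift_ne {ϑ : ℝ} (hϑ : ∀ j : ℤ, ϑ ≠ 2 * Real.pi * j) (j : ℤ) : ϑ + 2 * Real.pi * j ≠ 0 := by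
  intro h
  apply hϑ (-j)
  push_cast
  linarith

include hu hs hm hL in
lemma U_summable (ϑ : ℝ) (hϑ : ∀ j : ℤ, ϑ ≠ 2 * Real.pi * j) :
    Summable (fun j : ℤ => Ufun u ((Complex.I * ((ϑ + 2 * Real.pi * j : ℝ) : ℂ)) * L)) := by
  obtain ⟨C, hC0, -, hC⟩ := Ufun_bound hu hs hm hL
  apply Summable.of_norm_bounded (summable_aux ϑ C)
  intro j
  exact hC _ (shift_ne hϑ j)

lemma one_sub_exp_mem {ϑ : ℝ} (hϑ : ∀ j : ℤ, ϑ ≠ 2 * Real.pi * j) :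
    1 - Complex.exp (-(Complex.I * ϑ)) ∈ Complex.slitPlane := by
  left
  have e : (Complex.exp (-(Complex.I * ϑ))).re = Real.cos ϑ := by
    rw [Complex.exp_re]; simp
  rw [Complex.sub_re, e, Complex.one_re]
  have h1 := Real.cos_le_one ϑ
  have h2 : Real.cos ϑ ≠ 1 := by
    intro h
    obtain ⟨n, hn⟩ := (Real.cos_eq_one_iff ϑ).mp h
    exact hϑ n (by rw [← hn]; ring)
  have := lt_of_le_of_ne h1 h2
  linarith

include hu hs hm hL in
lemma U_tsum (N : ℕ) (hN : L ≤ N) (ϑ : ℝ) (hϑ : ∀ j : ℤ, ϑ ≠ 2 * Real.pi * j) :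
    ∑' j : ℤ, Ufun u ((Complex.I * ((ϑ + 2 * Real.pi * j : ℝ) : ℂ)) * L)
     = -Complex.log (1 - Complex.exp (-(Complex.I * ϑ)))
        - ∑ m ∈ Finset.range N, Sf u L m * Complex.exp (-(Complex.I * ϑ) * m) := by
  obtain ⟨C, hC0, hC, -⟩ := Ufun_bound hu hs hm hL
  have t1 : Tendsto (fun ε : ℝ => ∑' j : ℤ, Ufun u (((ε:ℂ) + Complex.I * ((ϑ + 2 * Real.pi * j : ℝ) : ℂ)) * L))
      (𝓝[>] 0) (𝓝 (∑' j : ℤ, Ufun u ((Complex.I * ((ϑ + 2 * Real.pi * j : ℝ) : ℂ)) * L))) := by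
    apply tendsto_tsum_of_dominated_convergence (summable_aux ϑ C)
    · intro j
      exact Ufun_tendsto hu hs hL _ (shift_ne hϑ j)
    · filter_upwards [self_mem_nhdsWithin] with ε hε j
      refine (hC _ (by simpa using hε)).trans ?_
      have ha' : 0 < |ϑ + 2 * Real.pi * j| := abs_pos.mpr (shift_ne hϑ j)
      have : |ϑ + 2 * Real.pi * j| ≤ ‖(ε:ℂ) + Complex.I * ((ϑ + 2 * Real.pi * j : ℝ) : ℂ)‖ := by
        have h2 := Complex.abs_im_le_norm ((ε:ℂ) + Complex.I * ((ϑ + 2 * Real.pi * j : ℝ) : ℂ))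
        have h3 : ((ε:ℂ) + Complex.I * ((ϑ + 2 * Real.pi * j : ℝ) : ℂ)).im = ϑ + 2 * Real.pi * j := by
          simp
        rwa [h3] at h2
      gcongr
  have t2 : Tendsto (fun ε : ℝ => -Complex.log (1 - Complex.exp (-((ε:ℂ) + Complex.I * ϑ)))
        - ∑ m ∈ Finset.range N, Sf u L m * Complex.exp (-((ε:ℂ) + Complex.I * ϑ) * m))
      (𝓝[>] 0) (𝓝 (-Complex.log (1 - Complex.exp (-(Complex.I * ϑ)))
        - ∑ m ∈ Finset.range N, Sf u L m * Complex.exp (-(Complex.I * ϑ) * m))) := by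
    have hc : ContinuousAt (fun ε : ℝ => -Complex.log (1 - Complex.exp (-((ε:ℂ) + Complex.I * ϑ)))
        - ∑ m ∈ Finset.range N, Sf u L m * Complex.exp (-((ε:ℂ) + Complex.I * ϑ) * m)) 0 := by
      apply ContinuousAt.sub
      · apply ContinuousAt.neg
        apply ContinuousAt.clog
        · fun_prop
        · simpa using one_sub_exp_mem hϑ
      · fun_prop
    have := hc.tendsto.mono_left (nhdsWithin_le_nhds (s := Ioi 0))
    simpa using this
  refine tendsto_nhds_unique t1 (t2.congr' ?_)
  filter_upwards [self_mem_nhdsWithin] with ε hε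
  rw [← poisson hu hs hm hL ϑ ε hε]
  exact (lhs_sum hu hs hm hL N hN _ (by simpa using hε)).tsum_eq.symm
end

lemma FX_eq {u : ℝ → ℝ} (hu : ContDiff ℝ (⊤ : ℕ∞) u)
    (hs : Function.support u ⊆ Set.Icc 1 (Real.exp 1)) (hm : (∫ y : ℝ, u y) = 1)
    (X : ℝ) (hX : 1 < X) (N : ℕ) (hN : Real.log X ≤ N) (ϑ : ℝ) (hϑ : ∀ j : ℤ, ϑ ≠ 2 * Real.pi * j) :
    FX u X ϑ = ∑ m ∈ Finset.range N, Sf u (Real.log X) m * Complex.exp (-(Complex.I * ϑ) * m) := by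
  have h := U_tsum hu hs hm (Real.log_pos hX) N hN ϑ hϑ
  push_cast at h
  unfold FX
  rw [h]
  ring

lemma ne_two_pi {ϑ : ℝ} (h : ϑ ∈ Ioo (-Real.pi) Real.pi) (h0 : ϑ ≠ 0) (j : ℤ) : ϑ ≠ 2 * Real.pi * j := by
  rintro rfl
  have hj : j ≠ 0 := by rintro rfl; simp at h0
  have h1 := h.1
  have h2 := h.2
  have hp := Real.pi_pos
  have : (-1:ℝ) < j := by nlinarith
  have h3 : (j:ℝ) < 1 := by nlinarith
  have : -1 < j := by exact_mod_cast this
  have : j < 1 := by exact_mod_cast h3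
  omega

lemma exp_orth (n m : ℤ) :
    ∫ ϑ in (-Real.pi)..Real.pi, Complex.exp (Complex.I * ϑ * n) * Complex.exp (-(Complex.I * m * ϑ))
      = if n = m then 2 * (Real.pi : ℂ) else 0 := by
  have e : ∀ ϑ : ℝ, Complex.exp (Complex.I * ϑ * n) * Complex.exp (-(Complex.I * m * ϑ))
      = Complex.exp ((Complex.I * (n - m)) * ϑ) := by
    intro ϑ
    rw [← Complex.exp_add]
    ring_nf
  simp only [e]
  split_ifs with h
  · subst h
    simp
    ring
  · have hne : (n:ℂ) - m ≠ 0 := sub_ne_zero.mpr (by exact_mod_cast h)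
    rw [integral_exp_mul_complex (mul_ne_zero Complex.I_ne_zero hne)]
    have : Complex.exp (Complex.I * (n - m) * (Real.pi:ℝ)) = Complex.exp (Complex.I * (n - m) * ((-Real.pi : ℝ):ℂ)) := by
      rw [Complex.exp_eq_exp_iff_exists_int]
      refine ⟨n - m, ?_⟩
      push_cast
      ring
    rw [this, sub_self, zero_div]
/-- Lemma 5.1 of the paper (normalization k = 1). -/
theorem stmt_5 (X : ℝ) (hX : 1 < X) (u : ℝ → ℝ)
    (hu_smooth : ContDiff ℝ (⊤ : ℕ∞) u) (hu_nonneg : ∀ y, 0 ≤ u y)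
    (hu_supp : Function.support u ⊆ Set.Icc 1 (Real.exp 1))
    (hu_mass : (∫ y : ℝ, u y) = 1) :
    (∀ ϑ : ℝ, (∀ j : ℤ, ϑ ≠ 2 * Real.pi * j) →
        Summable (fun j : ℤ => Ufun u (Complex.I * ((ϑ : ℂ) + 2 * Real.pi * j) * Real.log X)))
    ∧ MeasureTheory.IntegrableOn (FX u X) (Set.Ioo (-Real.pi) Real.pi)
    ∧ (∀ m : ℤ,
        (1 / ((2 * Real.pi : ℝ) : ℂ)) *
          ∫ ϑ in (-Real.pi)..Real.pi, FX u X (-ϑ) * Complex.exp (-(Complex.I * m * ϑ))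
        = if 1 ≤ m then
            (1 / (m : ℂ)) *
              ((∫ y in (min (Real.exp (m / Real.log X)) (Real.exp 1))..(Real.exp 1), u y : ℝ) : ℂ)
          else 0) := by
  have hL := Real.log_pos hX
  obtain ⟨N, hN⟩ := exists_nat_ge (Real.log X)
  have hae0 : ∀ᵐ ϑ : ℝ, ϑ ≠ 0 := Measure.ae_ne volume 0
  have hFX := FX_eq hu_smooth hu_supp hu_mass X hX N hN
  refine ⟨?_, ?_, ?_⟩
  · intro ϑ hϑ
    have := U_summable hu_smooth hu_supp hu_mass hL ϑ hϑ
    push_cast at this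
    exact this
  · have hc : Continuous (fun ϑ : ℝ => ∑ m ∈ Finset.range N,
        Sf u (Real.log X) m * Complex.exp (-(Complex.I * ϑ) * m)) := by fun_prop
    have hi : IntegrableOn _ (Set.Ioo (-Real.pi) Real.pi) :=
      (hc.integrableOn_Icc (a := -Real.pi) (b := Real.pi)).mono_set Ioo_subset_Icc_self
    refine hi.congr ?_
    filter_upwards [ae_restrict_mem measurableSet_Ioo, ae_restrict_of_ae hae0] with ϑ h1 h2
    exact (hFX ϑ (ne_two_pi h1 h2)).symm
  · intro m
    have hpi : -Real.pi ≤ Real.pi := by linarith [Real.pi_pos]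
    have e1 : ∫ ϑ in (-Real.pi)..Real.pi, FX u X (-ϑ) * Complex.exp (-(Complex.I * m * ϑ))
        = ∫ ϑ in (-Real.pi)..Real.pi, ∑ n ∈ Finset.range N, Sf u (Real.log X) n *
          (Complex.exp (Complex.I * ϑ * (n:ℤ)) * Complex.exp (-(Complex.I * m * ϑ))) := by
      rw [intervalIntegral.integral_of_le hpi, intervalIntegral.integral_of_le hpi,
        integral_Ioc_eq_integral_Ioo, integral_Ioc_eq_integral_Ioo]
      apply integral_congr_ae
      filter_upwards [ae_restrict_mem measurableSet_Ioo, ae_restrict_of_ae hae0] with ϑ h1 h2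
      have h3 : -ϑ ∈ Ioo (-Real.pi) Real.pi := ⟨by linarith [h1.2], by linarith [h1.1]⟩
      rw [hFX (-ϑ) (ne_two_pi h3 (neg_ne_zero.mpr h2)), Finset.sum_mul]
      refine Finset.sum_congr rfl fun n _ => ?_
      rw [mul_assoc]
      congr 3
      push_cast
      ring
    rw [e1, intervalIntegral.integral_finsetSum]
    · simp only [intervalIntegral.integral_const_mul, exp_orth]
      have hpc : (Real.pi : ℂ) ≠ 0 := by exact_mod_cast Real.pi_ne_zero
      split_ifs with hm
      · obtain ⟨k, rfl⟩ : ∃ k : ℕ, m = k := ⟨m.toNat, by omega⟩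
        have e2 : ∑ n ∈ Finset.range N, Sf u (Real.log X) n * (if (n:ℤ) = (k:ℤ) then 2 * (Real.pi:ℂ) else 0)
            = Sf u (Real.log X) k * (2 * Real.pi) := by
          by_cases hk : k < N
          · rw [Finset.sum_eq_single k]
            · simp
            · intro b _ hb
              simp [hb]
            · intro h; exact absurd (Finset.mem_range.mpr hk) h
          · rw [Sf_zero hL k (hN.trans (by exact_mod_cast not_lt.mp hk)), zero_mul]
            apply Finset.sum_eq_zero
            intro n hn
            have : n ≠ k := by have := Finset.mem_range.mp hn; omega
            simp [this]
        rw [e2]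
        unfold Sf
        push_cast
        field_simp
      · rw [Finset.sum_eq_zero, mul_zero]
        intro n _
        by_cases hn : (n:ℤ) = m
        · have : n = 0 := by omega
          subst this
          simp [Sf]
        · simp [hn]
    · intro n _
      apply Continuous.intervalIntegrable
      fun_prop
end

section
/- Let X > 1, let E₁(z) = ∫_0^∞ e^{−z−t}/(z+t) dt for z ∈ ℂ not on the closed negative real axis, let u : ℝ → ℝ be a smooth (C^∞) nonnegative function supported in [1,e] with ∫ u(y) dy = 1, set U(z) = ∫_1^e u(y) E₁(z log y) dy, and define F_X(ϑ) = −Log(1 − e^{−iϑ}) − Σ_{j∈ℤ} U(i(ϑ + 2πj) log X) for real ϑ with ϑ/(2π) ∉ ℤ. Then the logarithmic singularities at ϑ = 0 cancel: the limit lim_{ϑ→0} F_X(ϑ) exists and equals Σ_{m=1}^{∞} (1/m) ∫_{min(e^{m/log X}, e)}^{e} u(y) dy (a sum in which all terms with m ≥ log X vanish). -/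
open MeasureTheory Complex Filter

lemma aux_norm_add (w : ℂ) (hw : 0 ≤ w.re) (t : ℝ) (ht : 0 < t) : ‖w‖ ≤ ‖w + t‖ := by
  rw [← sq_le_sq₀ (norm_nonneg _) (norm_nonneg _), ← Complex.normSq_eq_norm_sq,
    ← Complex.normSq_eq_norm_sq, Complex.normSq_apply, Complex.normSq_apply]
  simp
  nlinarith [mul_nonneg hw ht.le]

lemma aux_ne (w : ℂ) (hw : 0 ≤ w.re) (t : ℝ) (ht : 0 < t) : w + t ≠ 0 := by
  intro h
  have := congrArg Complex.re h
  simp at this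
  linarith

lemma aux_norm_t (w : ℂ) (hw : 0 ≤ w.re) (t : ℝ) (ht : 0 < t) : t ≤ ‖w + t‖ := by
  refine le_trans ?_ (Complex.re_le_norm _)
  simp [hw]

lemma aux_int_exp : IntegrableOn (fun t : ℝ => Real.exp (-t)) (Set.Ioi 0) :=
  integrableOn_exp_neg_Ioi 0

lemma aux_int_texp : IntegrableOn (fun t : ℝ => t * Real.exp (-t)) (Set.Ioi 0) := by
  have := Real.GammaIntegral_convergent (s := 2) (by norm_num)
  refine this.congr_fun (fun t ht => ?_) measurableSet_Ioi
  norm_num [mul_comm]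

lemma aux_integral_texp : ∫ t in Set.Ioi (0:ℝ), t * Real.exp (-t) = 1 := by
  have := Real.Gamma_eq_integral (s := 2) (by norm_num)
  rw [Real.Gamma_two] at this
  rw [this]
  refine setIntegral_congr_fun measurableSet_Ioi (fun t ht => ?_)
  norm_num [mul_comm]

lemma aux_norm_exp (w : ℂ) (t : ℝ) : ‖Complex.exp (-w - t)‖ = Real.exp (-w.re) * Real.exp (-t) := by
  rw [Complex.norm_exp, ← Real.exp_add]
  simp [sub_eq_add_neg]

lemma aux_E_meas (w : ℂ) : Measurable (fun t : ℝ => Complex.exp (-w - t) / (w + t)) := by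
  fun_prop

lemma aux_E_int (w : ℂ) (hw : 0 ≤ w.re) (hw0 : w ≠ 0) :
    IntegrableOn (fun t : ℝ => Complex.exp (-w - t) / (w + t)) (Set.Ioi 0) := by
  refine Integrable.mono' (aux_int_exp.const_mul (‖w‖⁻¹)) (aux_E_meas w).aestronglyMeasurable ?_
  filter_upwards [ae_restrict_mem measurableSet_Ioi] with t ht
  have h1 := aux_norm_add w hw t ht
  have h0 : 0 < ‖w‖ := norm_pos_iff.2 hw0
  rw [norm_div, aux_norm_exp, div_eq_inv_mul]
  have : Real.exp (-w.re) ≤ 1 := Real.exp_le_one_iff.2 (by linarith)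
  gcongr
  nlinarith [Real.exp_pos (-t)]

lemma aux_wE (w : ℂ) (hw : 0 ≤ w.re) : ‖w * expInt w‖ ≤ Real.exp (-w.re) := by
  unfold expInt
  rw [← integral_const_mul]
  refine (norm_integral_le_of_norm_le (aux_int_exp.const_mul (Real.exp (-w.re))) ?_).trans ?_
  · filter_upwards [ae_restrict_mem measurableSet_Ioi] with t ht
    have h1 := aux_norm_add w hw t ht
    have h2 : 0 < ‖w + t‖ := norm_pos_iff.2 (aux_ne w hw t ht)
    rw [norm_mul, norm_div, aux_norm_exp, mul_div_assoc', div_le_iff₀ h2, mul_comm]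
    gcongr
  · rw [integral_const_mul, integral_exp_neg_Ioi_zero, mul_one]

lemma aux_wE1 (w : ℂ) (hw : 0 ≤ w.re) : ‖w * expInt w‖ ≤ 1 :=
  (aux_wE w hw).trans (Real.exp_le_one_iff.2 (by linarith))

lemma aux_integral_cexp (w : ℂ) : ∫ t in Set.Ioi (0:ℝ), Complex.exp (-w - t) = Complex.exp (-w) := by
  have : ∀ t : ℝ, Complex.exp (-w - t) = Complex.exp (-w) * ((Real.exp (-t) : ℝ) : ℂ) := by
    intro t; rw [Complex.ofReal_exp, ← Complex.exp_add]; push_cast; ring_nf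
  simp_rw [this]
  rw [integral_const_mul, integral_complex_ofReal, integral_exp_neg_Ioi_zero]; simp

lemma aux_int_cexp (w : ℂ) : IntegrableOn (fun t : ℝ => Complex.exp (-w - t)) (Set.Ioi 0) := by
  have : ∀ t : ℝ, Complex.exp (-w - t) = Complex.exp (-w) * ((Real.exp (-t) : ℝ) : ℂ) := by
    intro t; rw [Complex.ofReal_exp, ← Complex.exp_add]; push_cast; ring_nf
  simp_rw [this]
  exact (aux_int_exp.ofReal).const_mul _

noncomputable def EE2 (w : ℂ) : ℂ := Complex.exp (-w) - w * expInt w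
noncomputable def EE3 (w : ℂ) : ℂ := (Complex.exp (-w) - w * EE2 w) / 2

lemma aux_norm_cexp (w : ℂ) (hw : 0 ≤ w.re) : ‖Complex.exp (-w)‖ ≤ 1 := by
  rw [Complex.norm_exp]; simpa using hw

lemma EE2_bound (w : ℂ) (hw : 0 ≤ w.re) : ‖EE2 w‖ ≤ 2 := by
  unfold EE2
  have h1 := aux_wE1 w hw
  have h2 := aux_norm_cexp w hw
  linarith [norm_sub_le (Complex.exp (-w)) (w * expInt w)]

lemma wEE2_bound (w : ℂ) (hw : 0 ≤ w.re) : ‖w * EE2 w‖ ≤ 1 := by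
  rcases eq_or_ne w 0 with rfl | hw0
  · simp
  unfold EE2 expInt
  rw [← aux_integral_cexp, ← integral_const_mul, ← integral_sub (aux_int_cexp w)
    ((aux_E_int w hw hw0).const_mul w), ← integral_const_mul]
  refine (norm_integral_le_of_norm_le aux_int_texp ?_).trans aux_integral_texp.le
  filter_upwards [ae_restrict_mem measurableSet_Ioi] with t ht
  have h1 := aux_norm_add w hw t ht
  have h3 := aux_ne w hw t ht
  have h2 : 0 < ‖w + t‖ := norm_pos_iff.2 h3
  have : w * (Complex.exp (-w - t) - w * (Complex.exp (-w - t) / (w + t))) =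
      w * t * Complex.exp (-w - t) / (w + t) := by
    field_simp; ring
  rw [this, norm_div, norm_mul, aux_norm_exp, norm_mul, Complex.norm_real, Real.norm_of_nonneg (le_of_lt ht),
    div_le_iff₀ h2]
  have h4 : Real.exp (-w.re) ≤ 1 := Real.exp_le_one_iff.2 (by linarith)
  have ht' : 0 < t := ht
  calc ‖w‖ * t * (Real.exp (-w.re) * Real.exp (-t)) ≤ ‖w + t‖ * t * (1 * Real.exp (-t)) := by gcongr
    _ = _ := by ring

lemma EE3_bound (w : ℂ) (hw : 0 ≤ w.re) : ‖EE3 w‖ ≤ 1 := by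
  unfold EE3
  have h1 := wEE2_bound w hw
  have h2 := aux_norm_cexp w hw
  rw [norm_div]
  simp
  linarith [norm_sub_le (Complex.exp (-w)) (w * EE2 w)]

lemma expInt_hasDerivAt (w : ℂ) (hw : 0 ≤ w.re) (hw0 : w ≠ 0) :
    HasDerivAt expInt (-(Complex.exp (-w) / w)) w := by
  have h0 : 0 < ‖w‖ := norm_pos_iff.2 hw0
  set F' : ℂ → ℝ → ℂ := fun z t => -(Complex.exp (-z - t) / (z + t)) -
    Complex.exp (-z - t) / (z + t)^2 with hF'
  have key : ∀ z ∈ Metric.ball w (‖w‖/2), ∀ t : ℝ, 0 < t → ‖w‖/2 ≤ ‖z + t‖ := by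
    intro z hz t ht
    have h1 := aux_norm_add w hw t ht
    rw [mem_ball_iff_norm] at hz
    have h2 : ‖w + t‖ ≤ ‖z + t‖ + ‖z - w‖ := by
      have : w + t = (z + t) - (z - w) := by ring
      rw [this]; exact norm_sub_le _ _
    linarith
  have keyre : ∀ z ∈ Metric.ball w (‖w‖/2), -z.re ≤ ‖w‖ := by
    intro z hz
    rw [mem_ball_iff_norm] at hz
    have := Complex.abs_re_le_norm (z - w)
    rw [Complex.sub_re] at this
    have := abs_le.1 this
    linarith
  have main := hasDerivAt_integral_of_dominated_loc_of_deriv_le (μ := volume.restrict (Set.Ioi (0:ℝ)))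
    (F := fun (z : ℂ) (t : ℝ) => Complex.exp (-z - t) / (z + t)) (F' := F') (x₀ := w)
    (s := Metric.ball w (‖w‖/2))
    (bound := fun t => Real.exp ‖w‖ * (2/‖w‖ + (2/‖w‖)^2) * Real.exp (-t))
    (Metric.ball_mem_nhds _ (by positivity))
    (Eventually.of_forall fun z => (aux_E_meas z).aestronglyMeasurable)
    (aux_E_int w hw hw0)
    (by apply Measurable.aestronglyMeasurable; simp only [hF']; fun_prop)
    (by
      filter_upwards [ae_restrict_mem measurableSet_Ioi] with t ht z hz
      have h1 := key z hz t ht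
      have h2 := keyre z hz
      have h3 : 0 < ‖z + t‖ := by linarith
      have h4 : ‖z + t‖⁻¹ ≤ 2/‖w‖ := by
        rw [← inv_div]; exact inv_anti₀ (by positivity) h1
      calc ‖F' z t‖ ≤ ‖Complex.exp (-z - t) / (z + t)‖ + ‖Complex.exp (-z - t) / (z + t)^2‖ := by
            simp only [hF']
            refine (norm_sub_le _ _).trans ?_
            rw [norm_neg]
        _ = Real.exp (-z.re) * (‖z + t‖⁻¹ + (‖z + t‖⁻¹)^2) * Real.exp (-t) := by
            rw [norm_div, norm_div, aux_norm_exp, norm_pow]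
            field_simp
        _ ≤ _ := by gcongr)
    (aux_int_exp.const_mul _)
    (by
      filter_upwards [ae_restrict_mem measurableSet_Ioi] with t ht z hz
      have h1 := key z hz t ht
      have h3 : z + t ≠ 0 := by
        rw [← norm_pos_iff]; linarith
      have e1 : HasDerivAt (fun z : ℂ => Complex.exp (-z - t)) (Complex.exp (-z - t) * (-1)) z :=
        (((hasDerivAt_id z).neg).sub_const (t : ℂ)).cexp
      have e2 : HasDerivAt (fun z : ℂ => z + t) 1 z := (hasDerivAt_id z).add_const _
      refine HasDerivAt.congr_deriv (e1.div e2 h3) ?_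
      simp only [hF']
      field_simp)
  have hint : ∫ t in Set.Ioi (0:ℝ), F' w t = 0 - Complex.exp (-w - (0:ℝ)) / (w + (0:ℝ)) := by
    have hne : ∀ t ∈ Set.Ici (0:ℝ), w + t ≠ 0 := by
      intro t ht
      rcases eq_or_lt_of_le (Set.mem_Ici.1 ht) with h | h
      · rw [← h]; simpa using hw0
      · exact aux_ne w hw t h
    refine integral_Ioi_of_hasDerivAt_of_tendsto' (f := fun t : ℝ => Complex.exp (-w - t) / (w + t)) ?_ main.1 ?_
    · intro t ht
      have h3 := hne t ht
      have e0 : HasDerivAt (fun t : ℝ => (t : ℂ)) 1 t := Complex.ofRealCLM.hasDerivAt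
      have e1 : HasDerivAt (fun t : ℝ => Complex.exp (-w - t)) (Complex.exp (-w - t) * (-1)) t :=
        (e0.const_sub (-w)).cexp
      have e2 : HasDerivAt (fun t : ℝ => w + t) 1 t := e0.const_add _
      refine HasDerivAt.congr_deriv (e1.div e2 h3) ?_
      simp only [hF']
      field_simp
    · have : Tendsto (fun t : ℝ => (Real.exp (-w.re) / ‖w‖) * Real.exp (-t)) atTop (nhds 0) := by
        simpa using (Real.tendsto_exp_neg_atTop_nhds_zero).const_mul (Real.exp (-w.re) / ‖w‖)
      refine squeeze_zero_norm' ?_ this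
      filter_upwards [eventually_gt_atTop 0] with t ht
      rw [norm_div, aux_norm_exp, div_mul_eq_mul_div]
      gcongr
      exact aux_norm_add w hw t ht
  have := main.2
  rw [hint] at this
  refine HasDerivAt.congr_deriv this ?_
  simp

lemma EE2_hasDerivAt (w : ℂ) (hw : 0 ≤ w.re) (hw0 : w ≠ 0) :
    HasDerivAt EE2 (-expInt w) w := by
  have h1 := expInt_hasDerivAt w hw hw0
  have h2 : HasDerivAt (fun w : ℂ => Complex.exp (-w)) (Complex.exp (-w) * (-1)) w :=
    ((hasDerivAt_id w).neg).cexp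
  refine HasDerivAt.congr_deriv (h2.sub ((hasDerivAt_id w).mul h1)) ?_
  simp
  field_simp
  ring

lemma EE3_hasDerivAt (w : ℂ) (hw : 0 ≤ w.re) (hw0 : w ≠ 0) :
    HasDerivAt EE3 (-EE2 w) w := by
  have h1 := EE2_hasDerivAt w hw hw0
  have h2 : HasDerivAt (fun w : ℂ => Complex.exp (-w)) (Complex.exp (-w) * (-1)) w :=
    ((hasDerivAt_id w).neg).cexp
  refine HasDerivAt.congr_deriv ((h2.sub ((hasDerivAt_id w).mul h1)).div_const 2) ?_
  simp [EE2]
  ring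

lemma deriv_vanish (f : ℝ → ℝ) (hf : Differentiable ℝ f) (h0 : ∀ s ≤ 0, f s = 0)
    (h1 : ∀ s, 1 ≤ s → f s = 0) : (∀ s ≤ 0, deriv f s = 0) ∧ (∀ s, 1 ≤ s → deriv f s = 0) := by
  constructor
  · intro s hs
    rw [← (hf s).derivWithin (uniqueDiffOn_Iic 0 s hs),
      derivWithin_congr (s := Set.Iic 0) (f := fun _ => (0:ℝ)) (fun x hx => h0 x hx) (h0 s hs)]
    simp
  · intro s hs
    rw [← (hf s).derivWithin (uniqueDiffOn_Ici 1 s hs),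
      derivWithin_congr (s := Set.Ici 1) (f := fun _ => (0:ℝ)) (fun x hx => h1 x hx) (h1 s hs)]
    simp

lemma bound_vanish (f : ℝ → ℝ) (hf : Continuous f) (h0 : ∀ s ≤ 0, f s = 0)
    (h1 : ∀ s, 1 ≤ s → f s = 0) : ∃ C, ∀ s, |f s| ≤ C := by
  have : HasCompactSupport f := by
    refine HasCompactSupport.of_support_subset_isCompact (isCompact_Icc (a := (0:ℝ)) (b := 1)) ?_
    intro s hs
    by_contra hn
    rw [Set.mem_Icc, not_and_or, not_le, not_le] at hn
    rcases hn with h | h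
    · exact hs (h0 s h.le)
    · exact hs (h1 s h.le)
  exact this.exists_bound_of_continuous hf

/-- data of a bump on `[0,1]`. -/
structure Bump (v : ℝ → ℝ) (C : ℝ) : Prop where
  smooth : ContDiff ℝ (⊤ : ℕ∞) v
  h0 : ∀ s ≤ 0, v s = 0
  h1 : ∀ s, 1 ≤ s → v s = 0
  d0 : ∀ s ≤ 0, deriv v s = 0
  d1 : ∀ s, 1 ≤ s → deriv v s = 0
  dd1 : ∀ s, 1 ≤ s → deriv (deriv v) s = 0
  hC : 0 ≤ C
  b1 : ∀ s, |deriv v s| ≤ C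
  b2 : ∀ s, |deriv (deriv v) s| ≤ C
  sd : ContDiff ℝ (⊤ : ℕ∞) (deriv v)
  cdd : Continuous (deriv (deriv v))

lemma exists_bump (v : ℝ → ℝ) (hv : ContDiff ℝ (⊤ : ℕ∞) v) (h0 : ∀ s ≤ 0, v s = 0)
    (h1 : ∀ s, 1 ≤ s → v s = 0) : ∃ C, Bump v C := by
  have hd : ContDiff ℝ (⊤ : ℕ∞) (deriv v) := by
    have : ContDiff ℝ ((⊤ : ℕ∞) + 1) v := hv
    exact (contDiff_succ_iff_deriv.1 this).2.2
  have hdd : ContDiff ℝ (⊤ : ℕ∞) (deriv (deriv v)) := by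
    have : ContDiff ℝ ((⊤ : ℕ∞) + 1) (deriv v) := hd
    exact (contDiff_succ_iff_deriv.1 this).2.2
  obtain ⟨a0, a1⟩ := deriv_vanish v (hv.differentiable (by simp)) h0 h1
  obtain ⟨b0, b1⟩ := deriv_vanish _ (hd.differentiable (by simp)) a0 a1
  obtain ⟨C1, hC1⟩ := bound_vanish _ hd.continuous a0 a1
  obtain ⟨C2, hC2⟩ := bound_vanish _ hdd.continuous b0 b1
  exact ⟨max C1 C2, hv, h0, h1, a0, a1, b1, le_max_of_le_left ((abs_nonneg _).trans (hC1 0)),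
    fun s => (hC1 s).trans (le_max_left _ _), fun s => (hC2 s).trans (le_max_right _ _),
    hd, hdd.continuous⟩

namespace Bump
variable {v : ℝ → ℝ} {C : ℝ}

lemma bv (h : Bump v C) (s : ℝ) : |v s| ≤ C * |s| := by
  have := Convex.norm_image_sub_le_of_norm_deriv_le (𝕜 := ℝ) (f := v) (s := Set.univ) (x := 0) (y := s)
    (C := C) (fun x _ => h.smooth.differentiable (by simp) x) (fun x _ => h.b1 x) convex_univ
    (Set.mem_univ _) (Set.mem_univ _)
  simpa [h.h0 0 le_rfl] using this

end Bump

noncomputable def Uv (v : ℝ → ℝ) (z : ℂ) : ℂ :=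
  ∫ s in Set.Ioi (0:ℝ), (v s : ℂ) * expInt (z * s)

lemma zs_re (z : ℂ) (hz : 0 ≤ z.re) (s : ℝ) (hs : 0 ≤ s) : 0 ≤ (z * s).re := by
  simp; positivity

lemma zs_ne (z : ℂ) (hz : z ≠ 0) (s : ℝ) (hs : 0 < s) : z * s ≠ 0 :=
  mul_ne_zero hz (by exact_mod_cast hs.ne')

lemma comp_deriv (f : ℂ → ℂ) (f' z : ℂ) (s : ℝ) (hf : HasDerivAt f f' (z * s)) :
    HasDerivAt (fun s : ℝ => f (z * s)) (f' * z) s := by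
  have e0 : HasDerivAt (fun t : ℝ => (t : ℂ)) 1 s := Complex.ofRealCLM.hasDerivAt
  have e1 : HasDerivAt (fun t : ℝ => z * (t : ℂ)) z s := by simpa using e0.const_mul z
  exact hf.comp s e1

lemma vE_bound {v : ℝ → ℝ} {C : ℝ} (h : Bump v C) (z : ℂ) (hz : 0 ≤ z.re) (hz0 : z ≠ 0) (s : ℝ) (hs : 0 < s) :
    ‖(v s : ℂ) * expInt (z * s)‖ ≤ (Set.Ioc 0 1).indicator (fun _ => C / ‖z‖) s := by
  have hzp : 0 < ‖z‖ := norm_pos_iff.2 hz0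
  by_cases h1 : s ≤ 1
  · rw [Set.indicator_of_mem (show s ∈ Set.Ioc (0:ℝ) 1 from ⟨hs, h1⟩), le_div_iff₀ hzp]
    have a := aux_wE1 (z * s) (zs_re z hz s hs.le)
    have b := h.bv s
    rw [abs_of_pos hs] at b
    rw [norm_mul, norm_mul, Complex.norm_real, Real.norm_of_nonneg hs.le] at a
    rw [norm_mul, Complex.norm_real, Real.norm_eq_abs]
    calc |v s| * ‖expInt (z * s)‖ * ‖z‖ ≤ (C * s) * ‖expInt (z * s)‖ * ‖z‖ := by gcongr
      _ = C * (‖z‖ * s * ‖expInt (z * s)‖) := by ring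
      _ ≤ C * 1 := by have := h.hC; gcongr
      _ = C := mul_one C
  · rw [h.h1 s (not_le.1 h1).le, Set.indicator_of_notMem (fun hh => h1 hh.2)]
    simp

lemma ind_integrable (c : ℝ) : Integrable ((Set.Ioc (0:ℝ) 1).indicator (fun _ => c))
    (volume.restrict (Set.Ioi 0)) := by
  refine Integrable.restrict ?_
  rw [integrable_indicator_iff measurableSet_Ioc]
  exact integrableOn_const (by simp) (by simp)

lemma E_cont (f f' : ℂ → ℂ) (hf : ∀ w : ℂ, 0 ≤ w.re → w ≠ 0 → HasDerivAt f (f' w) w)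
    (z : ℂ) (hz : 0 ≤ z.re) (hz0 : z ≠ 0) :
    ContinuousOn (fun s : ℝ => f (z * s)) (Set.Ioi 0) := by
  intro s hs
  exact (comp_deriv f _ z s (hf _ (zs_re z hz s (le_of_lt hs)) (zs_ne z hz0 s hs))).continuousAt.continuousWithinAt

lemma vE_meas {v : ℝ → ℝ} {C : ℝ} (h : Bump v C) (z : ℂ) (hz : 0 ≤ z.re) (hz0 : z ≠ 0) :
    AEStronglyMeasurable (fun s : ℝ => (v s : ℂ) * expInt (z * s)) (volume.restrict (Set.Ioi 0)) := by
  refine ContinuousOn.aestronglyMeasurable ?_ measurableSet_Ioi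
  refine ContinuousOn.mul ?_ (E_cont _ _ expInt_hasDerivAt z hz hz0)
  exact (Complex.continuous_ofReal.comp h.smooth.continuous).continuousOn

lemma vE_int {v : ℝ → ℝ} {C : ℝ} (h : Bump v C) (z : ℂ) (hz : 0 ≤ z.re) (hz0 : z ≠ 0) :
    IntegrableOn (fun s : ℝ => (v s : ℂ) * expInt (z * s)) (Set.Ioi 0) := by
  refine Integrable.mono' (ind_integrable (C/‖z‖)) (vE_meas h z hz hz0) ?_
  filter_upwards [ae_restrict_mem measurableSet_Ioi] with s hs
  exact vE_bound h z hz hz0 s hs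

lemma ddE_bound {v : ℝ → ℝ} {C : ℝ} (h : Bump v C) (z : ℂ) (hz : 0 ≤ z.re) (s : ℝ) (hs : 0 < s) :
    ‖((deriv (deriv v) s : ℝ) : ℂ) * EE3 (z * s)‖ ≤ (Set.Ioc 0 1).indicator (fun _ => C) s := by
  by_cases h1 : s ≤ 1
  · rw [Set.indicator_of_mem (show s ∈ Set.Ioc (0:ℝ) 1 from ⟨hs, h1⟩)]
    have a := EE3_bound (z * s) (zs_re z hz s hs.le)
    have b := h.b2 s
    rw [norm_mul, Complex.norm_real, Real.norm_eq_abs]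
    nlinarith [norm_nonneg (EE3 (z*s)), h.hC]
  · rw [h.dd1 s (not_le.1 h1).le, Set.indicator_of_notMem (fun hh => h1 hh.2)]
    simp

lemma ddE_int {v : ℝ → ℝ} {C : ℝ} (h : Bump v C) (z : ℂ) (hz : 0 ≤ z.re) (hz0 : z ≠ 0) :
    IntegrableOn (fun s : ℝ => ((deriv (deriv v) s : ℝ) : ℂ) * EE3 (z * s)) (Set.Ioi 0) := by
  refine Integrable.mono' (ind_integrable C) ?_ ?_
  · refine ContinuousOn.aestronglyMeasurable ?_ measurableSet_Ioi
    refine ContinuousOn.mul ?_ (E_cont _ _ EE3_hasDerivAt z hz hz0)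
    exact (Complex.continuous_ofReal.comp h.cdd).continuousOn
  · filter_upwards [ae_restrict_mem measurableSet_Ioi] with s hs
    exact ddE_bound h z hz s hs

lemma Uv_ibp {v : ℝ → ℝ} {C : ℝ} (h : Bump v C) (z : ℂ) (hz : 0 ≤ z.re) (hz0 : z ≠ 0) :
    Uv v z = (∫ s in Set.Ioi (0:ℝ), ((deriv (deriv v) s : ℝ) : ℂ) * EE3 (z * s)) / z^2 := by
  have hi1 := vE_int h z hz hz0
  have hi2 := (ddE_int h z hz hz0).div_const (z^2)
  rw [← sub_eq_zero]
  unfold Uv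
  rw [← integral_div, ← integral_sub hi1 hi2]
  set P : ℝ → ℂ := fun s => -((v s : ℂ) * EE2 (z * s) / z + ((deriv v s : ℝ) : ℂ) * EE3 (z * s) / z^2) with hP
  have hP0 : P 0 = 0 := by simp [hP, h.h0 0 le_rfl, h.d0 0 le_rfl]
  have := integral_Ioi_of_hasDerivAt_of_tendsto (f := P) (a := 0) (m := 0)
    (f' := fun s : ℝ => (v s : ℂ) * expInt (z * s) - ((deriv (deriv v) s : ℝ) : ℂ) * EE3 (z * s) / z^2)
    ?_ ?_ (hi1.sub hi2) ?_
  · rw [this, hP0]; simp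
  · have hv : Tendsto (fun s => |v s| * 2 / ‖z‖ + |deriv v s| * 1 / ‖z‖^2) (nhdsWithin 0 (Set.Ici 0)) (nhds 0) := by
      have : Continuous (fun s => |v s| * 2 / ‖z‖ + |deriv v s| * 1 / ‖z‖^2) := by
        have := h.smooth.continuous
        have := h.sd.continuous
        fun_prop
      have := this.tendsto 0
      simp [h.h0 0 le_rfl, h.d0 0 le_rfl] at this
      simpa using this.mono_left nhdsWithin_le_nhds
    unfold ContinuousWithinAt
    rw [hP0]
    refine squeeze_zero_norm' ?_ hv
    filter_upwards [self_mem_nhdsWithin] with s hs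
    have a := EE2_bound (z * s) (zs_re z hz s hs)
    have b := EE3_bound (z * s) (zs_re z hz s hs)
    simp only [hP]
    rw [norm_neg]
    refine (norm_add_le _ _).trans ?_
    rw [norm_div, norm_div, norm_mul, norm_mul, Complex.norm_real, Complex.norm_real, norm_pow,
      Real.norm_eq_abs, Real.norm_eq_abs]
    gcongr
  · intro s hs
    have hr := zs_re z hz s (le_of_lt hs)
    have hn := zs_ne z hz0 s hs
    have d2 := comp_deriv _ _ z s (EE2_hasDerivAt _ hr hn)
    have d3 := comp_deriv _ _ z s (EE3_hasDerivAt _ hr hn)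
    have dv : HasDerivAt (fun s => (v s : ℂ)) ((deriv v s : ℝ) : ℂ) s :=
      (h.smooth.differentiable (by simp) s).hasDerivAt.ofReal_comp
    have ddv : HasDerivAt (fun s => ((deriv v s : ℝ) : ℂ)) ((deriv (deriv v) s : ℝ) : ℂ) s :=
      (h.sd.differentiable (by simp) s).hasDerivAt.ofReal_comp
    refine HasDerivAt.congr_deriv (((dv.mul d2).div_const z).add ((ddv.mul d3).div_const (z^2))).neg ?_
    field_simp
    ring
  · refine tendsto_const_nhds.congr' ?_
    filter_upwards [eventually_ge_atTop 1] with s hs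
    simp [hP, h.h1 s hs, h.d1 s hs]

lemma Uv_bound {v : ℝ → ℝ} {C : ℝ} (h : Bump v C) (z : ℂ) (hz : 0 ≤ z.re) (hz0 : z ≠ 0) :
    ‖Uv v z‖ ≤ C / ‖z‖^2 := by
  rw [Uv_ibp h z hz hz0, norm_div, norm_pow]
  gcongr
  refine (norm_integral_le_of_norm_le (ind_integrable C) ?_).trans ?_
  · filter_upwards [ae_restrict_mem measurableSet_Ioi] with s hs
    exact ddE_bound h z hz s hs
  · rw [integral_indicator measurableSet_Ioc, Measure.restrict_restrict measurableSet_Ioc,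
      Set.inter_eq_left.2 Set.Ioc_subset_Ioi_self]
    simp

lemma Uv_tendsto {v : ℝ → ℝ} {C : ℝ} (h : Bump v C) (z : ℂ) (hz : 0 ≤ z.re) (hz0 : z ≠ 0) :
    Tendsto (Uv v) (nhdsWithin z {w | 0 ≤ w.re}) (nhds (Uv v z)) := by
  have hzp : 0 < ‖z‖ := norm_pos_iff.2 hz0
  have hev : ∀ᶠ w in nhdsWithin z {w : ℂ | 0 ≤ w.re}, 0 ≤ w.re ∧ ‖z‖/2 < ‖w‖ := by
    refine eventually_mem_nhdsWithin.and (nhdsWithin_le_nhds ?_)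
    exact continuous_norm.continuousAt.eventually (lt_mem_nhds (by linarith : ‖z‖/2 < ‖z‖))
  refine tendsto_integral_filter_of_dominated_convergence ((Set.Ioc 0 1).indicator (fun _ => C / (‖z‖/2)))
    ?_ ?_ (ind_integrable _) ?_
  · filter_upwards [hev] with w hw
    exact vE_meas h w hw.1 (norm_pos_iff.1 (by linarith [hw.2]))
  · filter_upwards [hev] with w hw
    filter_upwards [ae_restrict_mem measurableSet_Ioi] with s hs
    refine (vE_bound h w hw.1 (norm_pos_iff.1 (by linarith [hw.2])) s hs).trans ?_
    refine Set.indicator_le_indicator ?_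
    have := h.hC
    have := hw.2
    gcongr
  · filter_upwards [ae_restrict_mem measurableSet_Ioi] with s hs
    refine Tendsto.const_mul _ ?_
    have := (expInt_hasDerivAt _ (zs_re z hz s (le_of_lt hs)) (zs_ne z hz0 s hs)).continuousAt
    refine Tendsto.comp (g := expInt) (f := fun w : ℂ => w * (s:ℂ)) this ?_
    have : Continuous (fun w : ℂ => w * (s:ℂ)) := by fun_prop
    exact (this.tendsto z).mono_left nhdsWithin_le_nhds

noncomputable def Vv (v : ℝ → ℝ) (s : ℝ) : ℝ := ∫ r in (0:ℝ)..s, v r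

lemma Vv_deriv {v : ℝ → ℝ} {C : ℝ} (h : Bump v C) (s : ℝ) : HasDerivAt (Vv v) (v s) s :=
  h.smooth.continuous.integral_hasStrictDerivAt 0 s |>.hasDerivAt

lemma Vv_bound {v : ℝ → ℝ} {C : ℝ} (h : Bump v C) (s : ℝ) (hs : 0 ≤ s) : |Vv v s| ≤ C * s ^ 2 := by
  have := intervalIntegral.norm_integral_le_of_norm_le_const (a := 0) (b := s) (f := v) (C := C * s) ?_
  · rw [sub_zero, abs_of_nonneg hs] at this
    unfold Vv
    calc _ ≤ _ := this
      _ = _ := by ring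
  · intro x hx
    rw [Set.uIoc_of_le hs] at hx
    refine (h.bv x).trans ?_
    have := h.hC
    rw [abs_of_pos hx.1]
    gcongr
    exact hx.2

lemma Vexp_bound {v : ℝ → ℝ} {C : ℝ} (h : Bump v C) (z : ℂ) (s : ℝ) (hs : 0 < s) :
    ‖(Vv v s / s : ℂ) * Complex.exp (-(z * s))‖ ≤ C * (s * Real.exp (-z.re * s)) := by
  have := Vv_bound h s hs.le
  rw [norm_mul, norm_div, Complex.norm_real, Complex.norm_real, Complex.norm_exp, Real.norm_eq_abs,
    Real.norm_of_nonneg hs.le, ← mul_assoc]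
  simp
  gcongr
  rw [div_le_iff₀ hs]
  linarith

lemma Vexp_int {v : ℝ → ℝ} {C : ℝ} (h : Bump v C) (z : ℂ) (hz : 0 < z.re) :
    IntegrableOn (fun s : ℝ => (Vv v s / s : ℂ) * Complex.exp (-(z * s))) (Set.Ioi 0) := by
  have e := integrableOn_rpow_mul_exp_neg_mul_rpow (p := 1) (s := 1) (b := z.re) (by norm_num) (by norm_num) hz
  simp only [Real.rpow_one] at e
  refine Integrable.mono' (e.const_mul C) ?_ ?_
  · have : Continuous (Vv v) := continuous_iff_continuousAt.2 fun s => (Vv_deriv h s).continuousAt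
    have := this.measurable
    apply Measurable.aestronglyMeasurable
    fun_prop
  · filter_upwards [ae_restrict_mem measurableSet_Ioi] with s hs
    exact Vexp_bound h z s hs

lemma Uv_laplace {v : ℝ → ℝ} {C : ℝ} (h : Bump v C) (z : ℂ) (hz : 0 < z.re) :
    Uv v z = ∫ s in Set.Ioi (0:ℝ), (Vv v s / s : ℂ) * Complex.exp (-(z * s)) := by
  have hz0 : z ≠ 0 := by rintro rfl; simp at hz
  have hzp : 0 < ‖z‖ := norm_pos_iff.2 hz0
  have hi1 := vE_int h z hz.le hz0
  have hi2 := Vexp_int h z hz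
  rw [← sub_eq_zero]
  unfold Uv
  rw [← integral_sub hi1 hi2]
  set P : ℝ → ℂ := fun s => (Vv v s : ℂ) * expInt (z * s) with hP
  have hP0 : P 0 = 0 := by simp [hP, Vv]
  have hPb : ∀ s, 0 < s → ‖P s‖ ≤ C / ‖z‖ * (s * Real.exp (-(z.re * s))) := by
    intro s hs
    have a := aux_wE (z * s) (zs_re z hz.le s hs.le)
    rw [norm_mul, norm_mul, Complex.norm_real, Real.norm_of_nonneg hs.le] at a
    have b := Vv_bound h s hs.le
    have e : (z * (s:ℂ)).re = z.re * s := by simp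
    rw [e] at a
    simp only [hP]
    rw [norm_mul, Complex.norm_real, Real.norm_eq_abs]
    calc _ ≤ (C * s^2) * ‖expInt (z * s)‖ := by gcongr
      _ = C / ‖z‖ * s * (‖z‖ * s * ‖expInt (z * s)‖) := by field_simp
      _ ≤ C / ‖z‖ * s * Real.exp (-(z.re * s)) := by have := h.hC; gcongr
      _ = _ := by ring
  have := integral_Ioi_of_hasDerivAt_of_tendsto (f := P) (a := 0) (m := 0)
    (f' := fun s : ℝ => (v s : ℂ) * expInt (z * s) - (Vv v s / s : ℂ) * Complex.exp (-(z * s)))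
    ?_ ?_ (hi1.sub hi2) ?_
  · rw [this, hP0]; simp
  · have hv : Tendsto (fun s => C / ‖z‖ * (s * Real.exp (-(z.re * s)))) (nhdsWithin 0 (Set.Ici 0)) (nhds 0) := by
      have : Continuous (fun s => C / ‖z‖ * (s * Real.exp (-(z.re * s)))) := by
        fun_prop
      have := this.tendsto 0
      simp at this
      simpa using this.mono_left nhdsWithin_le_nhds
    unfold ContinuousWithinAt
    rw [hP0]
    refine squeeze_zero_norm' ?_ hv
    filter_upwards [self_mem_nhdsWithin] with s hs
    rcases eq_or_lt_of_le (Set.mem_Ici.1 hs) with h | h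
    · rw [← h, hP0]; simp
    · exact hPb s h
  · intro s hs
    have hr := zs_re z hz.le s (le_of_lt hs)
    have hn := zs_ne z hz0 s hs
    have d2 := comp_deriv _ _ z s (expInt_hasDerivAt _ hr hn)
    have dv : HasDerivAt (fun s => (Vv v s : ℂ)) (v s : ℂ) s :=
      (Vv_deriv h s).ofReal_comp
    refine HasDerivAt.congr_deriv (dv.mul d2) ?_
    have : (s : ℂ) ≠ 0 := right_ne_zero_of_mul hn
    field_simp
    ring
  · have t : Tendsto (fun s => C / ‖z‖ * (s * Real.exp (-(z.re * s)))) atTop (nhds 0) := by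
      have t1 := (Real.tendsto_pow_mul_exp_neg_atTop_nhds_zero 1).comp (tendsto_id.const_mul_atTop hz)
      have t2 := t1.const_mul (C / ‖z‖ / z.re)
      rw [mul_zero] at t2
      refine t2.congr fun s => ?_
      simp
      field_simp
    refine squeeze_zero_norm' ?_ t
    filter_upwards [eventually_gt_atTop 0] with s hs
    exact hPb s hs

lemma Vv_zero {v : ℝ → ℝ} {C : ℝ} (h : Bump v C) (s : ℝ) (hs : s ≤ 0) : Vv v s = 0 := by
  unfold Vv
  rw [intervalIntegral.integral_congr (g := fun _ => (0:ℝ))]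
  · simp
  · intro r hr
    rw [Set.uIcc_of_ge hs] at hr
    exact h.h0 r hr.2

noncomputable def fP (v : ℝ → ℝ) (l : ℝ) (z : ℂ) (x : ℝ) : ℂ :=
  ((Vv v (x / l) : ℝ) / x : ℂ) * Complex.exp (-(z * x))

lemma fP_nonpos {v : ℝ → ℝ} {C : ℝ} (h : Bump v C) (l : ℝ) (hl : 0 < l) (z : ℂ) (x : ℝ) (hx : x ≤ 0) :
    fP v l z x = 0 := by
  unfold fP
  rw [Vv_zero h _ (div_nonpos_of_nonpos_of_nonneg hx hl.le)]
  simp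

lemma fP_bound {v : ℝ → ℝ} {C : ℝ} (h : Bump v C) (l : ℝ) (hl : 0 < l) (z : ℂ) (x : ℝ) (hx : 0 < x) :
    ‖fP v l z x‖ ≤ C / l^2 * (x * Real.exp (-z.re * x)) := by
  unfold fP
  have := Vv_bound h (x/l) (by positivity)
  rw [norm_mul, norm_div, Complex.norm_real, Complex.norm_real, Complex.norm_exp, Real.norm_eq_abs,
    Real.norm_of_nonneg hx.le, ← mul_assoc]
  simp
  gcongr
  rw [div_le_iff₀ hx]
  calc _ ≤ _ := this
    _ = _ := by field_simp

lemma fP_cont {v : ℝ → ℝ} {C : ℝ} (h : Bump v C) (l : ℝ) (hl : 0 < l) (z : ℂ) :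
    Continuous (fP v l z) := by
  have hV : Continuous (Vv v) := continuous_iff_continuousAt.2 fun s => (Vv_deriv h s).continuousAt
  rw [continuous_iff_continuousAt]
  intro x
  rcases eq_or_ne x 0 with rfl | hx
  · unfold ContinuousAt
    rw [fP_nonpos h l hl z 0 le_rfl]
    have t : Tendsto (fun x => C / l^2 * (|x| * Real.exp (-z.re * x))) (nhds 0) (nhds 0) := by
      have : Continuous (fun x => C / l^2 * (|x| * Real.exp (-z.re * x))) := by fun_prop
      have := this.tendsto 0
      simpa using this
    refine squeeze_zero_norm (fun x => ?_) t
    rcases le_or_gt x 0 with hx | hx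
    · rw [fP_nonpos h l hl z x hx, norm_zero]
      have := h.hC
      positivity
    · rw [abs_of_pos hx]
      exact fP_bound h l hl z x hx
  · have hx' : (x:ℂ) ≠ 0 := by exact_mod_cast hx
    unfold fP
    refine ContinuousAt.mul (ContinuousAt.div ?_ ?_ hx') ?_ <;> apply Continuous.continuousAt <;> fun_prop

lemma fP_decay {v : ℝ → ℝ} {C : ℝ} (h : Bump v C) (l : ℝ) (hl : 0 < l) (z : ℂ) (hz : 0 < z.re) :
    fP v l z =O[cocompact ℝ] (fun x => |x| ^ (-(2:ℝ))) := by
  rw [cocompact_eq_atBot_atTop, Asymptotics.isBigO_sup]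
  constructor
  · refine Asymptotics.IsBigO.congr' (Asymptotics.isBigO_zero _ _) ?_ EventuallyEq.rfl
    filter_upwards [eventually_le_atBot 0] with x hx
    rw [fP_nonpos h l hl z x hx]
  · have h1 := (isLittleO_exp_neg_mul_rpow_atTop hz (-3)).isBigO
    have h2 : (fun x : ℝ => x * Real.exp (-z.re * x)) =O[atTop] (fun x : ℝ => x * x ^ (-3 : ℝ)) :=
      (Asymptotics.isBigO_refl _ _).mul h1
    have h3 : fP v l z =O[atTop] (fun x : ℝ => x * Real.exp (-z.re * x)) := by
      refine Asymptotics.IsBigO.of_bound (C / l^2) ?_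
      filter_upwards [eventually_gt_atTop 0] with x hx
      rw [Real.norm_of_nonneg (by positivity)]
      exact fP_bound h l hl z x hx
    refine (h3.trans h2).congr' EventuallyEq.rfl ?_
    filter_upwards [eventually_gt_atTop 0] with x hx
    rw [abs_of_pos hx]
    nth_rewrite 1 [← Real.rpow_one x]
    rw [← Real.rpow_add hx]
    norm_num

lemma fP_fourier {v : ℝ → ℝ} {C : ℝ} (h : Bump v C) (l : ℝ) (hl : 0 < l) (z : ℂ) (hz : 0 < z.re) (ξ : ℝ) :
    FourierTransform.fourier (fP v l z) ξ = Uv v ((z + 2 * Real.pi * ξ * Complex.I) * l) := by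
  have hl' : (l:ℂ) ≠ 0 := by exact_mod_cast hl.ne'
  rw [Real.fourier_real_eq_integral_exp_smul, Uv_laplace h]
  · rw [← setIntegral_eq_integral_of_forall_compl_eq_zero (s := Set.Ioi (0:ℝ))]
    · have := integral_comp_mul_left_Ioi (fun x : ℝ => Complex.exp (↑(-2 * Real.pi * x * ξ) * Complex.I) • fP v l z x) 0 hl
      rw [mul_zero, eq_inv_smul_iff₀ hl.ne'] at this
      rw [← this, ← integral_smul]
      refine setIntegral_congr_fun measurableSet_Ioi (fun s hs => ?_)
      have hs' : (s:ℂ) ≠ 0 := by exact_mod_cast (ne_of_gt hs)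
      simp only [fP, smul_eq_mul, Complex.real_smul]
      rw [mul_div_cancel_left₀ s hl.ne']
      have e : Complex.exp (-((z + 2 * Real.pi * ξ * Complex.I) * l * s)) =
        Complex.exp (↑(-2 * Real.pi * (l * s) * ξ) * Complex.I) * Complex.exp (-(z * ((l * s : ℝ) : ℂ))) := by
        rw [← Complex.exp_add]; push_cast; ring_nf
      rw [e]
      push_cast
      field_simp
    · intro x hx
      rw [fP_nonpos h l hl z x (not_lt.1 hx)]
      simp
  · simp
    positivity

lemma Uv_bound2 {v : ℝ → ℝ} {C : ℝ} (h : Bump v C) (l : ℝ) (hl : 0 < l) (z : ℂ) (hz : 0 ≤ z.re)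
    (hi0 : z.im ≠ 0) (hi : |z.im| < 1) (j : ℤ) :
    (z + 2 * Real.pi * j * Complex.I) * l ≠ 0 ∧ 
    ‖Uv v ((z + 2 * Real.pi * j * Complex.I) * l)‖ ≤ C / (2 * Real.pi * l)^2 * (1 / |j + z.im / (2 * Real.pi)| ^ (2:ℝ)) := by
  have hpi := Real.pi_gt_three
  have ha : (j + z.im / (2 * Real.pi) : ℝ) ≠ 0 := by
    intro h0
    have e : z.im = -(2 * Real.pi) * j := by field_simp at h0; linarith
    rcases eq_or_ne j 0 with rfl | hj
    · simp at e; exact hi0 e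
    · have : (1:ℝ) ≤ |(j:ℝ)| := by exact_mod_cast Int.one_le_abs hj
      rw [e, abs_mul, abs_neg, abs_of_pos (by positivity)] at hi
      nlinarith
  have him : ((z + 2 * Real.pi * j * Complex.I) * l).im = 2 * Real.pi * l * (j + z.im / (2 * Real.pi)) := by
    simp; field_simp; ring
  have hre : ((z + 2 * Real.pi * j * Complex.I) * l).re = z.re * l := by simp
  have h1 : 2 * Real.pi * l * |j + z.im / (2 * Real.pi)| ≤ ‖(z + 2 * Real.pi * j * Complex.I) * l‖ := by
    refine le_trans ?_ (Complex.abs_im_le_norm _)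
    rw [him, abs_mul, abs_of_pos (by positivity : 0 < 2 * Real.pi * l)]
  have h2 : 0 < |j + z.im / (2 * Real.pi)| := abs_pos.2 ha
  have h3 : (z + 2 * Real.pi * j * Complex.I) * l ≠ 0 := by
    rw [← norm_pos_iff]; exact lt_of_lt_of_le (by positivity) h1
  refine ⟨h3, (Uv_bound h _ (by rw [hre]; positivity) h3).trans ?_⟩
  rw [Real.rpow_two]
  have := h.hC
  calc _ ≤ C / (2 * Real.pi * l * |j + z.im / (2 * Real.pi)|)^2 := by gcongr
    _ = _ := by field_simp

lemma bound_summable (C l a : ℝ) : Summable (fun j : ℤ => C / (2 * Real.pi * l)^2 * (1 / |j + a| ^ (2:ℝ))) :=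
  ((Real.summable_one_div_int_add_rpow a 2).2 (by norm_num)).mul_left _

lemma poisson_s6 {v : ℝ → ℝ} {C : ℝ} (h : Bump v C) (l : ℝ) (hl : 0 < l) (z : ℂ) (hz : 0 < z.re)
    (hi0 : z.im ≠ 0) (hi : |z.im| < 1) :
    ∑' j : ℤ, Uv v ((z + 2 * Real.pi * j * Complex.I) * l) = ∑' m : ℕ, fP v l z (m + 1) := by
  have hs : Summable (fun j : ℤ => Uv v ((z + 2 * Real.pi * j * Complex.I) * l)) :=
    Summable.of_norm_bounded (bound_summable C l (z.im / (2 * Real.pi)))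
      (fun j => (Uv_bound2 h l hl z hz.le hi0 hi j).2)
  have := Real.tsum_eq_tsum_fourier_of_rpow_decay_of_summable (fP_cont h l hl z) (b := 2) (by norm_num)
    (fP_decay h l hl z hz) (by
      refine hs.congr fun j => ?_
      rw [fP_fourier h l hl z hz]; push_cast; rfl) 0
  have e : ∀ n : ℤ, FourierTransform.fourier (fP v l z) n * fourier n ((0:ℝ) : UnitAddCircle) =
      Uv v ((z + 2 * Real.pi * n * Complex.I) * l) := by
    intro n
    rw [fP_fourier h l hl z hz]
    simp
  simp_rw [e] at this
  rw [← this]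
  have hinj : Function.Injective (fun m : ℕ => (m : ℤ) + 1) := fun a b hab => by
    simpa using hab
  rw [← hinj.tsum_eq]
  · refine tsum_congr fun m => ?_
    push_cast
    rw [zero_add]
  · intro n hn
    have : 0 < n := by
      by_contra hneg
      refine hn ?_
      simp only
      rw [fP_nonpos h l hl]
      rw [zero_add]
      exact_mod_cast not_lt.1 hneg
    exact ⟨(n-1).toNat, by simp; omega⟩

lemma key_eps {v : ℝ → ℝ} {C : ℝ} (h : Bump v C) (l : ℝ) (hl : 0 < l) (hV : ∀ s, 1 ≤ s → Vv v s = 1)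
    (z : ℂ) (hz : 0 < z.re) (hi0 : z.im ≠ 0) (hi : |z.im| < 1) :
    -Complex.log (1 - Complex.exp (-z)) - ∑' j : ℤ, Uv v ((z + 2 * Real.pi * j * Complex.I) * l) =
      ∑ m ∈ Finset.range ⌈l⌉₊, (1 / ((m:ℂ) + 1)) * ((1 - Vv v ((m + 1) / l) : ℝ) : ℂ) *
        Complex.exp (-(z * (m + 1))) := by
  rw [poisson_s6 h l hl z hz hi0 hi]
  set g : ℕ → ℂ := fun m => (1 / ((m:ℂ) + 1)) * ((1 - Vv v ((m + 1) / l) : ℝ) : ℂ) *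
        Complex.exp (-(z * (m + 1))) with hg
  have hgs : HasSum g (∑ m ∈ Finset.range ⌈l⌉₊, g m) := by
    refine hasSum_sum_of_ne_finset_zero fun m hm => ?_
    rw [Finset.mem_range, not_lt] at hm
    have : l ≤ m := Nat.ceil_le.1 hm
    simp only [hg]
    rw [hV _ (by rw [le_div_iff₀ hl]; linarith)]
    simp
  have hw : ‖Complex.exp (-z)‖ < 1 := by
    rw [Complex.norm_exp]; simpa using hz
  have hlog := (hasSum_nat_add_iff' 1).2 (Complex.hasSum_taylorSeries_neg_log hw)
  simp only [Finset.range_one, Finset.sum_singleton, pow_zero, Nat.cast_zero, div_zero, sub_zero] at hlog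
  have := (hlog.sub hgs).tsum_eq
  have e : ∀ m : ℕ, fP v l z (m + 1) = Complex.exp (-z) ^ (m + 1) / ((m + 1 : ℕ) : ℂ) - g m := by
    intro m
    simp only [hg, fP]
    rw [← Complex.exp_nat_mul]
    have e1 : ((m + 1 : ℕ) : ℂ) * -z = -(z * (m + 1)) := by push_cast; ring
    rw [e1]
    push_cast
    ring
  simp_rw [e]
  rw [this]
  ring

lemma key_limit {v : ℝ → ℝ} {C : ℝ} (h : Bump v C) (l : ℝ) (hl : 0 < l) (hV : ∀ s, 1 ≤ s → Vv v s = 1)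
    (θ : ℝ) (hi0 : θ ≠ 0) (hi : |θ| < 1) :
    -Complex.log (1 - Complex.exp (-(Complex.I * θ))) -
      ∑' j : ℤ, Uv v ((Complex.I * θ + 2 * Real.pi * j * Complex.I) * l) =
      ∑ m ∈ Finset.range ⌈l⌉₊, (1 / ((m:ℂ) + 1)) * ((1 - Vv v ((m + 1) / l) : ℝ) : ℂ) *
        Complex.exp (-(Complex.I * θ * (m + 1))) := by
  have hcz : Continuous (fun ε : ℝ => (ε : ℂ) + Complex.I * θ) := by fun_prop
  have tz : Tendsto (fun ε : ℝ => (ε : ℂ) + Complex.I * θ) (nhdsWithin 0 (Set.Ioi 0)) (nhds (Complex.I * θ)) := by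
    have := hcz.tendsto 0
    simp only [Complex.ofReal_zero, zero_add] at this
    exact this.mono_left nhdsWithin_le_nhds
  have hre : ∀ ε : ℝ, ((ε : ℂ) + Complex.I * θ).re = ε := by intro ε; simp
  have him : ∀ ε : ℝ, ((ε : ℂ) + Complex.I * θ).im = θ := by intro ε; simp
  have hre0 : (Complex.I * θ).re = 0 := by simp
  have him0 : (Complex.I * θ).im = θ := by simp
  have t1 : Tendsto (fun ε : ℝ => -Complex.log (1 - Complex.exp (-((ε : ℂ) + Complex.I * θ))) -
      ∑' j : ℤ, Uv v (((ε : ℂ) + Complex.I * θ + 2 * Real.pi * j * Complex.I) * l))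
      (nhdsWithin 0 (Set.Ioi 0)) (nhds (-Complex.log (1 - Complex.exp (-(Complex.I * θ))) -
      ∑' j : ℤ, Uv v ((Complex.I * θ + 2 * Real.pi * j * Complex.I) * l))) := by
    refine Tendsto.sub ?_ ?_
    · have hc : ContinuousAt (fun z : ℂ => -Complex.log (1 - Complex.exp (-z))) (Complex.I * θ) := by
        refine ContinuousAt.neg (ContinuousAt.clog (by fun_prop) ?_)
        left
        have : Complex.exp (-(Complex.I * θ)) = Complex.exp (((-θ : ℝ) : ℂ) * Complex.I) := by
          push_cast; ring_nf
        rw [this, Complex.sub_re, Complex.exp_ofReal_mul_I_re, Real.cos_neg, Complex.one_re, sub_pos]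
        refine lt_of_le_of_ne (Real.cos_le_one θ) fun hc => hi0 ?_
        have hpi := Real.pi_gt_three
        have := abs_lt.1 hi
        exact (Real.cos_eq_one_iff_of_lt_of_lt (by linarith) (by linarith)).1 hc
      exact hc.tendsto.comp tz
    · refine tendsto_tsum_of_dominated_convergence (bound_summable C l (θ / (2 * Real.pi))) ?_ ?_
      · intro j
        have hne := (Uv_bound2 h l hl (Complex.I * θ) hre0.ge (by rwa [him0]) (by rwa [him0]) j).1
        refine (Uv_tendsto h _ (by simp) hne).comp ?_
        refine tendsto_nhdsWithin_iff.2 ⟨(tz.add_const _).mul_const _, ?_⟩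
        filter_upwards [self_mem_nhdsWithin] with ε hε
        have : 0 < ε := hε
        simp
        positivity
      · filter_upwards [self_mem_nhdsWithin] with ε hε j
        have := (Uv_bound2 h l hl ((ε : ℂ) + Complex.I * θ) ((hre ε).symm ▸ (le_of_lt hε)) (by rwa [him]) (by rwa [him]) j).2
        rwa [him] at this
  have t2 : Tendsto (fun ε : ℝ => ∑ m ∈ Finset.range ⌈l⌉₊, (1 / ((m:ℂ) + 1)) * ((1 - Vv v ((m + 1) / l) : ℝ) : ℂ) *
        Complex.exp (-(((ε : ℂ) + Complex.I * θ) * (m + 1)))) (nhdsWithin 0 (Set.Ioi 0))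
        (nhds (∑ m ∈ Finset.range ⌈l⌉₊, (1 / ((m:ℂ) + 1)) * ((1 - Vv v ((m + 1) / l) : ℝ) : ℂ) *
        Complex.exp (-(Complex.I * θ * (m + 1))))) := by
    have : Continuous (fun z : ℂ => ∑ m ∈ Finset.range ⌈l⌉₊, (1 / ((m:ℂ) + 1)) * ((1 - Vv v ((m + 1) / l) : ℝ) : ℂ) *
        Complex.exp (-(z * (m + 1)))) := by fun_prop
    exact (this.tendsto _).comp tz
  refine tendsto_nhds_unique t1 (t2.congr' ?_)
  filter_upwards [self_mem_nhdsWithin] with ε hε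
  exact (key_eps h l hl hV _ (by rw [hre]; exact hε) (by rwa [him]) (by rwa [him])).symm

lemma Ufun_eq_s6 (u : ℝ → ℝ) (hu : ∀ y, Real.exp 1 < y → u y = 0) (z : ℂ) :
    Ufun u z = Uv (fun s => u (Real.exp s) * Real.exp s) z := by
  unfold Ufun Uv
  rw [intervalIntegral.integral_of_le (by simp),
    ← setIntegral_eq_of_subset_of_forall_sdiff_eq_zero measurableSet_Ioi (Set.Ioc_subset_Ioi_self)]
  · have him : Real.exp '' Set.Ioi 0 = Set.Ioi 1 := by
      ext y
      constructor
      · rintro ⟨s, hs, rfl⟩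
        exact Real.one_lt_exp_iff.2 hs
      · intro hy
        have hy' : (1:ℝ) < y := hy
        exact ⟨Real.log y, Real.log_pos hy', Real.exp_log (by linarith)⟩
    rw [← him, integral_image_eq_integral_abs_deriv_smul measurableSet_Ioi
      (fun x _ => (Real.hasDerivAt_exp x).hasDerivWithinAt) Real.exp_injective.injOn]
    refine setIntegral_congr_fun measurableSet_Ioi (fun s hs => ?_)
    simp only [Real.log_exp, abs_of_pos (Real.exp_pos s), Complex.real_smul]
    push_cast
    ring
  · intro y hy
    rw [hu y (by by_contra hn; exact hy.2 ⟨hy.1, not_lt.1 hn⟩)]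
    simp

/-- the logarithmic singularities of `F_X` at ϑ = 0 cancel, and
`F_X(ϑ) → Σ_{m=1}^∞ (1/m) ∫_{min(e^{m/log X}, e)}^e u(y) dy` as ϑ → 0. -/
theorem stmt_6 (X : ℝ) (hX : 1 < X) (u : ℝ → ℝ)
    (hu_smooth : ContDiff ℝ (⊤ : ℕ∞) u) (hu_nonneg : ∀ y, 0 ≤ u y)
    (hu_supp : Function.support u ⊆ Set.Icc 1 (Real.exp 1))
    (hu_mass : (∫ y : ℝ, u y) = 1) :
    Tendsto (fun ϑ : ℝ => FX u X ϑ) (nhdsWithin 0 {(0 : ℝ)}ᶜ)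
      (nhds (∑' m : ℕ,
        (1 / ((m : ℂ) + 1)) *
          ((∫ y in (min (Real.exp (((m : ℝ) + 1) / Real.log X)) (Real.exp 1))..(Real.exp 1),
              u y : ℝ) : ℂ))) := by
  set l := Real.log X with hl_def
  have hl : 0 < l := Real.log_pos hX
  have he1 : (1:ℝ) < Real.exp 1 := Real.one_lt_exp_iff.2 one_pos
  have huc := hu_smooth.continuous
  have hlt : ∀ y, y < 1 → u y = 0 := fun y hy => by
    by_contra hn; exact absurd (hu_supp hn).1 (not_le.2 hy)
  have hgt : ∀ y, Real.exp 1 < y → u y = 0 := fun y hy => by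
    by_contra hn; exact absurd (hu_supp hn).2 (not_le.2 hy)
  have hle : ∀ y, y ≤ 1 → u y = 0 := by
    have hcl : IsClosed {y | u y = 0} := isClosed_eq huc continuous_const
    have : closure (Set.Iio (1:ℝ)) ⊆ {y | u y = 0} := hcl.closure_subset_iff.2 hlt
    rw [closure_Iio] at this
    exact this
  have hge : ∀ y, Real.exp 1 ≤ y → u y = 0 := by
    have hcl : IsClosed {y | u y = 0} := isClosed_eq huc continuous_const
    have : closure (Set.Ioi (Real.exp 1)) ⊆ {y | u y = 0} := hcl.closure_subset_iff.2 hgt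
    rw [closure_Ioi] at this
    exact this
  set v : ℝ → ℝ := fun s => u (Real.exp s) * Real.exp s with hv
  obtain ⟨C, h⟩ := exists_bump v ((hu_smooth.comp Real.contDiff_exp).mul Real.contDiff_exp)
    (fun s hs => by simp only [hv]; rw [hle _ (Real.exp_le_one_iff.2 hs), zero_mul])
    (fun s hs => by simp only [hv]; rw [hge _ (Real.exp_le_exp.2 hs), zero_mul])
  have hVu : ∀ s, Vv v s = ∫ y in (1:ℝ)..(Real.exp s), u y := by
    intro s
    have := intervalIntegral.integral_comp_mul_deriv (a := 0) (b := s) (f := Real.exp) (f' := Real.exp) (g := u)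
      (fun x _ => Real.hasDerivAt_exp x) Real.continuous_exp.continuousOn huc
    rw [Real.exp_zero] at this
    exact this
  have hmass : ∀ b, Real.exp 1 ≤ b → ∫ y in (1:ℝ)..b, u y = 1 := by
    intro b hb
    rw [intervalIntegral.integral_of_le (by linarith), setIntegral_eq_integral_of_forall_compl_eq_zero, hu_mass]
    intro y hy
    by_cases h1 : y ≤ 1
    · exact hle y h1
    · refine hge y (hb.trans ?_)
      by_contra hn
      exact hy ⟨not_le.1 h1, (not_le.1 hn).le⟩
  have hV : ∀ s, 1 ≤ s → Vv v s = 1 := fun s hs => by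
    rw [hVu]; exact hmass _ (Real.exp_le_exp.2 hs)
  have hc : ∀ m : ℕ, (∫ y in (min (Real.exp (((m : ℝ) + 1) / l)) (Real.exp 1))..(Real.exp 1), u y) =
      1 - Vv v ((m + 1) / l) := by
    intro m
    rcases le_total (((m : ℝ) + 1) / l) 1 with hm | hm
    · rw [min_eq_left (Real.exp_le_exp.2 hm), hVu]
      have e1 := hmass _ le_rfl
      have e2 := intervalIntegral.integral_add_adjacent_intervals (μ := volume)
        (huc.intervalIntegrable 1 (Real.exp (((m : ℝ) + 1) / l)))
        (huc.intervalIntegrable (Real.exp (((m : ℝ) + 1) / l)) (Real.exp 1))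
      linarith
    · rw [min_eq_right (Real.exp_le_exp.2 hm), hV _ hm]
      simp
  simp_rw [hc]
  rw [tsum_eq_sum (s := Finset.range ⌈l⌉₊)]
  · have hcont : Continuous (fun θ : ℝ => ∑ m ∈ Finset.range ⌈l⌉₊, (1 / ((m:ℂ) + 1)) * ((1 - Vv v ((m + 1) / l) : ℝ) : ℂ) *
        Complex.exp (-(Complex.I * θ * (m + 1)))) := by fun_prop
    have t := (hcont.tendsto 0).mono_left (nhdsWithin_le_nhds (s := {(0:ℝ)}ᶜ))
    simp only [Complex.ofReal_zero, mul_zero, zero_mul, neg_zero, Complex.exp_zero, mul_one] at t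
    refine t.congr' ?_
    filter_upwards [self_mem_nhdsWithin, nhdsWithin_le_nhds (Metric.ball_mem_nhds (0:ℝ) one_pos)] with θ h0 h1
    rw [← key_limit h l hl hV θ h0 (by simpa using h1)]
    unfold FX
    congr 1
    refine tsum_congr fun j => ?_
    rw [Ufun_eq_s6 u hgt, ← hl_def]
    congr 1
    ring
  · intro m hm
    rw [Finset.mem_range, not_lt] at hm
    have : l ≤ m := Nat.ceil_le.1 hm
    rw [hV _ (by rw [le_div_iff₀ hl]; linarith)]
    simp
end
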